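/- arXiv:2511.13477 — 11 statements merged into one kernel-verified Lean document; each statement's English description precedes it below -/
import Mathlib

section
/- Let n, t, k be positive integers. If n < kt then Δ_{n,t}^{[k]} has no faces at all, and if n = kt then the only face of Δ_{n,t}^{[k]} is the empty set; in particular Δ_{n,t}^{[k]} has no nonempty faces when n ≤ kt. If n > kt, then Δ_{n,t}^{[k]} = Δ_t^λ, where λ = (λ_1, …, λ_{k+1}) is the partition with k+1 parts all equal to n − kt. -/
/-- The interval `{b, b+1, …, b+t-1}` (a `t`-path of the path graph, as a vertex set). -/
def pathInterval (b t : ℕ) : Finset ℕ := Finset.Icc b (b + t - 1)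

/-- `F` contains `k` pairwise disjoint intervals `{b, …, b+t-1} ⊆ [n]`. -/
def containsMatching (n t k : ℕ) (F : Finset ℕ) : Prop :=
  ∃ b : Fin k → ℕ,
    (∀ j, 1 ≤ b j ∧ b j + t - 1 ≤ n) ∧
    (∀ i j : Fin k, i ≠ j → Disjoint (pathInterval (b i) t) (pathInterval (b j) t)) ∧
    ∀ j, pathInterval (b j) t ⊆ F

/-- `Δ_{n,t}^{[k]}`, the Alexander dual of the Stanley–Reisner complex of the `k`-th
squarefree power of the `t`-path ideal of `P_n`: its faces are the sets `[n] ∖ F` where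
`F ⊆ [n]` contains `k` pairwise disjoint intervals of the form `{b, …, b+t-1} ⊆ [n]`. -/
def dualComplex (n t k : ℕ) : Set (Finset ℕ) :=
  { G | ∃ F : Finset ℕ, F ⊆ Finset.Icc 1 n ∧ containsMatching n t k F ∧
        G = Finset.Icc 1 n \ F }

/-- `lam` encodes (via the values `lam 1 ≥ lam 2 ≥ ⋯ ≥ lam r ≥ 1`) a partition
`λ = (λ_1 ≥ ⋯ ≥ λ_r ≥ 1)` with `r` parts. -/
def isPartition (r : ℕ) (lam : ℕ → ℕ) : Prop :=
  (∀ j, 1 ≤ j → j ≤ r → 1 ≤ lam j) ∧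
  ∀ j j', 1 ≤ j → j ≤ j' → j' ≤ r → lam j' ≤ lam j

/-- `a` is an entry of column `i` of the filled Young diagram of `λ`, i.e.
`a = (r - j)t + i` for some row `1 ≤ j ≤ r` with `λ_j ≥ i`. -/
def inColumn (t r : ℕ) (lam : ℕ → ℕ) (i a : ℕ) : Prop :=
  ∃ j, 1 ≤ j ∧ j ≤ r ∧ i ≤ lam j ∧ a = (r - j) * t + i

/-- The `t`-Young complex `Δ_t^λ`: the simplicial complex generated by the sets
`{a_1 < a_2 < ⋯ < a_{λ_1}}` where each `a_i` is a column-`i` entry of the filled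
Young diagram of `λ`. -/
def youngComplex (t r : ℕ) (lam : ℕ → ℕ) : Set (Finset ℕ) :=
  { F | ∃ a : ℕ → ℕ,
      (∀ i, 1 ≤ i → i < lam 1 → a i < a (i + 1)) ∧
      (∀ i, 1 ≤ i → i ≤ lam 1 → inColumn t r lam i (a i)) ∧
      F ⊆ Finset.image a (Finset.Icc 1 (lam 1)) }

/-- `G` is a facet (maximal face) of the complex `Δ`. -/
def isFacet (Δ : Set (Finset ℕ)) (G : Finset ℕ) : Prop :=
  G ∈ Δ ∧ ∀ G' ∈ Δ, G ⊆ G' → G' = G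

theorem sorted_of_containsMatching (n t k : ℕ) (ht : 1 ≤ t) (F : Finset ℕ)
    (h : containsMatching n t k F) :
    ∃ b : ℕ → ℕ, (∀ j, j < k → 1 ≤ b j ∧ b j + t ≤ n + 1) ∧
      (∀ e i, i + e < k → b i + e * t ≤ b (i + e)) ∧
      ∀ j, j < k → ∀ x, b j ≤ x → x < b j + t → x ∈ F := by
  obtain ⟨b, hb, hd, hF⟩ := h
  let s := Tuple.sort b
  have hm : Monotone (b ∘ s) := Tuple.monotone_sort b
  refine ⟨fun j => if hj : j < k then b (s ⟨j, hj⟩) else 0, ?_, ?_, ?_⟩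
  · intro j hj
    have := hb (s ⟨j, hj⟩)
    simp only [hj, dif_pos]
    omega
  · intro e
    induction e with
    | zero => intro i hi; simp
    | succ e ih =>
      intro i hi
      have h1 := ih i (by omega)
      have hi0 : i < k := by omega
      have hi1 : i + e < k := by omega
      have hi2 : i + (e + 1) < k := by omega
      simp only [hi0, hi1, hi2, dif_pos] at h1 ⊢
      have hle : b (s ⟨i + e, hi1⟩) ≤ b (s ⟨i + (e + 1), hi2⟩) :=
        hm (by simp [Fin.le_def])
      have hne : s ⟨i + e, hi1⟩ ≠ s ⟨i + (e + 1), hi2⟩ := by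
        intro hh
        have := s.injective hh
        simp at this
      have hdis := Finset.disjoint_left.mp (hd _ _ hne)
      have h3 : b (s ⟨i + e, hi1⟩) + t ≤ b (s ⟨i + (e + 1), hi2⟩) := by
        by_contra hc
        refine hdis (a := b (s ⟨i + (e + 1), hi2⟩)) ?_ ?_ <;>
          simp only [pathInterval, Finset.mem_Icc] <;> omega
      rw [Nat.add_mul]
      omega
  · intro j hj x h1 h2
    simp only [hj, dif_pos] at h1 h2
    apply hF (s ⟨j, hj⟩)
    simp only [pathInterval, Finset.mem_Icc]
    omega

theorem gap_position (n t k : ℕ) (b : ℕ → ℕ)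
    (h1 : ∀ j, j < k → 1 ≤ b j ∧ b j + t ≤ n + 1)
    (h2 : ∀ e i, i + e < k → b i + e * t ≤ b (i + e))
    (x : ℕ) (hx1 : 1 ≤ x) (hxn : x ≤ n)
    (hx : ∀ j, j < k → ¬ (b j ≤ x ∧ x < b j + t)) :
    ∃ c i, c ≤ k ∧ x = i + t * c ∧ 1 ≤ i ∧ i + k * t ≤ n ∧
      ∀ j, j < k → (b j ≤ j * t + i ↔ j < c) := by
  classical
  -- `c` is the first index whose interval lies beyond `x`, or `k`
  have hex : ∃ c, c = k ∨ (c < k ∧ x < b c) := ⟨k, Or.inl rfl⟩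
  obtain ⟨c, hc, hmin⟩ : ∃ c, (c = k ∨ (c < k ∧ x < b c)) ∧
      ∀ j, j < c → ¬ (j = k ∨ (j < k ∧ x < b j)) :=
    ⟨Nat.find hex, Nat.find_spec hex, fun j hj => Nat.find_min hex hj⟩
  have hck : c ≤ k := by omega
  have hlow : ∀ j, j < c → b j + (c - j) * t ≤ x := by
    intro j hj
    have a1 := hmin (c - 1) (by omega)
    have a2 := hx (c - 1) (by omega)
    have a3 := h2 (c - 1 - j) j (by omega)
    rw [show j + (c - 1 - j) = c - 1 by omega] at a3
    rw [show c - j = (c - 1 - j) + 1 by omega, Nat.add_mul]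
    omega
  have hhigh : ∀ j, c ≤ j → j < k → x + (j - c) * t < b j := by
    intro j hj hjk
    have a3 := h2 (j - c) c (by omega)
    rw [show c + (j - c) = j by omega] at a3
    omega
  have hct : c * t + 1 ≤ x := by
    rcases Nat.eq_zero_or_pos c with h0 | h0
    · subst h0; omega
    · have a1 := hlow 0 h0
      have a2 := h1 0 (by omega)
      rw [Nat.sub_zero] at a1
      omega
  have hmul : t * c = c * t := Nat.mul_comm _ _
  refine ⟨c, x - c * t, hck, by omega, by omega, ?_, ?_⟩
  · rcases Nat.lt_or_ge c k with h0 | h0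
    · have a1 := hhigh (k - 1) (by omega) (by omega)
      have a2 := h1 (k - 1) (by omega)
      have a3 : k * t = (k - 1 - c) * t + t + c * t := by
        rw [← Nat.succ_mul, ← Nat.add_mul]; congr 1; omega
      omega
    · have : c = k := by omega
      subst this; omega
  · intro j hj
    constructor
    · intro hle
      by_contra hcj
      have a1 := hhigh j (by omega) hj
      have a3 : j * t = (j - c) * t + c * t := by
        rw [← Nat.add_mul]; congr 1; omega
      omega
    · intro hjc
      have a1 := hlow j hjc
      have a3 : c * t = (c - j) * t + j * t := by
        rw [← Nat.add_mul]; congr 1; omega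
      omega

theorem containsMatching_le (n t k : ℕ) (ht : 1 ≤ t) (hk : 1 ≤ k) (F : Finset ℕ)
    (h : containsMatching n t k F) : k * t ≤ n := by
  obtain ⟨b, h1, h2, -⟩ := sorted_of_containsMatching n t k ht F h
  have a1 := h2 (k - 1) 0 (by omega)
  have a2 := h1 0 (by omega)
  have a3 := h1 (k - 1) (by omega)
  rw [Nat.zero_add] at a1
  have a4 : k * t = (k - 1) * t + t := by
    rw [← Nat.succ_mul]; congr 1; omega
  omega

theorem containsMatching_of_spaced (n t k : ℕ) (ht : 1 ≤ t) (F : Finset ℕ) (d : ℕ → ℕ)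
    (hd1 : ∀ j, 1 ≤ d j) (hdm : Monotone d) (hdn : ∀ j, d j + k * t ≤ n + 1)
    (hF : ∀ j, j < k → ∀ x, d j + j * t ≤ x → x < d j + j * t + t → x ∈ F) :
    containsMatching n t k F := by
  have key : ∀ i j, i < j → d i + i * t + t ≤ d j + j * t := by
    intro i j hij
    have a1 := hdm hij.le
    have a2 := Nat.mul_le_mul_right t (Nat.succ_le_of_lt hij)
    rw [Nat.succ_mul] at a2
    omega
  refine ⟨fun j => d j + j * t, ?_, ?_, ?_⟩
  · intro j
    have a1 := hd1 j
    have a2 := hdn j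
    have a3 := Nat.mul_le_mul_right t (Nat.succ_le_of_lt j.2)
    rw [Nat.succ_mul] at a3
    show 1 ≤ d j + j * t ∧ d j + j * t + t - 1 ≤ n
    omega
  · intro i j hij
    rw [Finset.disjoint_left]
    intro x hx hy
    simp only [pathInterval, Finset.mem_Icc] at hx hy
    have : (i : ℕ) ≠ j := fun h => hij (Fin.ext h)
    rcases Nat.lt_or_gt_of_ne this with h | h
    · have := key _ _ h; omega
    · have := key _ _ h; omega
  · intro j x hx
    simp only [pathInterval, Finset.mem_Icc] at hx
    exact hF j j.2 x (by omega) (by omega)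

theorem dual_subset_young (n t k : ℕ) (ht : 1 ≤ t) (hlt : k * t < n) (G : Finset ℕ)
    (hG : G ∈ dualComplex n t k) :
    G ∈ youngComplex t (k + 1) (fun _ => n - k * t) := by
  obtain ⟨F, hFn, hM, rfl⟩ := hG
  obtain ⟨b, h1, h2, h3⟩ := sorted_of_containsMatching n t k ht F hM
  let c : ℕ → ℕ := fun i => ((Finset.range k).filter (fun j => b j ≤ j * t + i)).card
  have hck : ∀ i, c i ≤ k := fun i => (Finset.card_filter_le _ _).trans (by simp)
  have hcm : ∀ i, c i ≤ c (i + 1) := by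
    intro i
    apply Finset.card_le_card
    intro j hj
    simp only [Finset.mem_filter] at hj ⊢
    exact ⟨hj.1, by omega⟩
  refine ⟨fun i => i + t * c i, ?_, ?_, ?_⟩
  · intro i _ _
    have := Nat.mul_le_mul_left t (hcm i)
    show i + t * c i < i + 1 + t * c (i + 1)
    omega
  · intro i _ hi
    have := hck i
    refine ⟨k + 1 - c i, by omega, by omega, hi, ?_⟩
    rw [show k + 1 - (k + 1 - c i) = c i by omega, Nat.mul_comm, Nat.add_comm]
  · intro x hx
    simp only [Finset.mem_sdiff, Finset.mem_Icc] at hx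
    obtain ⟨e, i, hek, hxe, hi1, hin, hiff⟩ := gap_position n t k b h1 h2 x hx.1.1 hx.1.2
      (fun j hj hh => hx.2 (h3 j hj x hh.1 hh.2))
    have hce : c i = e := by
      have : (Finset.range k).filter (fun j => b j ≤ j * t + i) = Finset.range e := by
        ext j
        simp only [Finset.mem_filter, Finset.mem_range]
        constructor
        · rintro ⟨p, q⟩; exact (hiff j p).1 q
        · intro p
          exact ⟨by omega, (hiff j (by omega)).2 p⟩
      show Finset.card _ = e
      rw [this, Finset.card_range]
    simp only [Finset.mem_image, Finset.mem_Icc]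
    exact ⟨i, ⟨hi1, by omega⟩, by rw [hce, hxe]⟩

theorem young_subset_dual (n t k : ℕ) (ht : 1 ≤ t) (hlt : k * t < n) (G : Finset ℕ)
    (hG : G ∈ youngComplex t (k + 1) (fun _ => n - k * t)) :
    G ∈ dualComplex n t k := by
  obtain ⟨a, hmono, hcol, hGa⟩ := hG
  simp only at hmono hcol hGa
  obtain ⟨m, hm⟩ : ∃ m, m = n - k * t := ⟨_, rfl⟩
  rw [← hm] at hmono hcol hGa
  have hc : ∀ i, ∃ c, 1 ≤ i → i ≤ m → c ≤ k ∧ a i = c * t + i := by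
    intro i
    by_cases h : 1 ≤ i ∧ i ≤ m
    · obtain ⟨j, hj1, hj2, -, hj⟩ := hcol i h.1 h.2
      exact ⟨k + 1 - j, fun _ _ => ⟨by omega, hj⟩⟩
    · exact ⟨0, fun p q => absurd ⟨p, q⟩ h⟩
  choose c hc using hc
  have hstep : ∀ i, 1 ≤ i → i < m → c i ≤ c (i + 1) := by
    intro i h1 h2
    have e1 := (hc i h1 h2.le).2
    have e2 := (hc (i + 1) (by omega) (by omega)).2
    have e3 := hmono i h1 h2
    by_contra hcon
    have e4 := Nat.mul_le_mul_right t (Nat.succ_le_of_lt (not_le.mp hcon))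
    rw [Nat.succ_mul] at e4
    omega
  have hcm : ∀ e i, 1 ≤ i → i + e ≤ m → c i ≤ c (i + e) := by
    intro e
    induction e with
    | zero => intro i _ _; exact le_rfl
    | succ e ih =>
      intro i p q
      exact (ih i p (by omega)).trans (hstep (i + e) (by omega) (by omega))
  have hcm' : ∀ i i', 1 ≤ i → i ≤ i' → i' ≤ m → c i ≤ c i' := by
    intro i i' p q r
    have := hcm (i' - i) i p (by omega)
    rwa [show i + (i' - i) = i' by omega] at this
  let S : ℕ → Finset ℕ := fun j => (Finset.Icc 1 m).filter (fun i => c i ≤ j)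
  have hSm : ∀ j, (S j).card ≤ m := fun j =>
    (Finset.card_filter_le _ _).trans (by simp)
  have hlow : ∀ i j, 1 ≤ i → i ≤ m → c i ≤ j → i ≤ (S j).card := by
    intro i j p q r
    have : Finset.Icc 1 i ⊆ S j := by
      intro y hy
      simp only [S, Finset.mem_filter, Finset.mem_Icc] at hy ⊢
      exact ⟨by omega, (hcm' y i hy.1 hy.2 q).trans r⟩
    simpa using Finset.card_le_card this
  have hhigh : ∀ i j, 1 ≤ i → i ≤ m → j < c i → (S j).card + 1 ≤ i := by
    intro i j p q r
    have : S j ⊆ Finset.Icc 1 (i - 1) := by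
      intro y hy
      simp only [S, Finset.mem_filter, Finset.mem_Icc] at hy ⊢
      refine ⟨hy.1.1, ?_⟩
      by_contra hcon
      have := hcm' i y p (by omega) hy.1.2
      omega
    have := Finset.card_le_card this
    simp only [Nat.card_Icc] at this
    omega
  have hGn : G ⊆ Finset.Icc 1 n := by
    intro x hx
    obtain ⟨i, hi, rfl⟩ := Finset.mem_image.mp (hGa hx)
    rw [Finset.mem_Icc] at hi ⊢
    obtain ⟨e1, e2⟩ := hc i hi.1 hi.2
    have := Nat.mul_le_mul_right t e1
    omega
  refine ⟨Finset.Icc 1 n \ G, Finset.sdiff_subset, ?_, (Finset.sdiff_sdiff_eq_self hGn).symm⟩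
  refine containsMatching_of_spaced n t k ht _ (fun j => (S j).card + 1) ?_ ?_ ?_ ?_
  · intro j; simp
  · intro j j' hjj
    simp only [add_le_add_iff_right]
    apply Finset.card_le_card
    intro y hy
    simp only [S, Finset.mem_filter] at hy ⊢
    exact ⟨hy.1, hy.2.trans hjj⟩
  · intro j
    have := hSm j
    show (S j).card + 1 + k * t ≤ n + 1
    omega
  · intro j hj x hx1 hx2
    have e0 := hSm j
    have e1 := Nat.mul_le_mul_right t (Nat.succ_le_of_lt hj)
    rw [Nat.succ_mul] at e1
    rw [Finset.mem_sdiff, Finset.mem_Icc]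
    refine ⟨by omega, fun hxG => ?_⟩
    obtain ⟨i, hi, rfl⟩ := Finset.mem_image.mp (hGa hxG)
    rw [Finset.mem_Icc] at hi
    obtain ⟨-, e2⟩ := hc i hi.1 hi.2
    rcases Nat.lt_or_ge j (c i) with h | h
    · have e3 := hhigh i j hi.1 hi.2 h
      have e4 := Nat.mul_le_mul_right t (Nat.succ_le_of_lt h)
      rw [Nat.succ_mul] at e4
      omega
    · have e3 := hlow i j hi.1 hi.2 h
      have e4 := Nat.mul_le_mul_right t h
      omega

/-- If `n < kt` then `Δ_{n,t}^{[k]}` has no faces; if `n = kt` its only face is `∅`;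
and if `n > kt` then `Δ_{n,t}^{[k]} = Δ_t^λ` for the partition `λ` with `k+1` parts
all equal to `n - kt`. -/
theorem dualComplex_eq_youngComplex (n t k : ℕ) (hn : 1 ≤ n) (ht : 1 ≤ t) (hk : 1 ≤ k) :
    (n < k * t → dualComplex n t k = ∅) ∧
    (n = k * t → dualComplex n t k = {∅}) ∧
    (k * t < n →
      dualComplex n t k = youngComplex t (k + 1) (fun _ => n - k * t)) := by
  refine ⟨?_, ?_, ?_⟩
  · intro hlt
    ext G
    simp only [Set.mem_empty_iff_false, iff_false]
    rintro ⟨F, -, hM, -⟩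
    have := containsMatching_le n t k ht hk F hM
    omega
  · intro heq
    ext G
    rw [Set.mem_singleton_iff]
    constructor
    · rintro ⟨F, -, hM, rfl⟩
      obtain ⟨b, h1, h2, h3⟩ := sorted_of_containsMatching n t k ht F hM
      rw [Finset.eq_empty_iff_forall_notMem]
      intro x hx
      simp only [Finset.mem_sdiff, Finset.mem_Icc] at hx
      obtain ⟨e, i, -, -, hi1, hin, -⟩ := gap_position n t k b h1 h2 x hx.1.1 hx.1.2
        (fun j hj hh => hx.2 (h3 j hj x hh.1 hh.2))
      omega
    · rintro rfl
      refine ⟨Finset.Icc 1 n, subset_rfl, ?_, by simp⟩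
      refine containsMatching_of_spaced n t k ht _ (fun _ => 1) (fun _ => le_rfl)
        (fun _ _ _ => le_rfl) (fun _ => by omega) ?_
      intro j hj x hx1 hx2
      have e1 := Nat.mul_le_mul_right t (Nat.succ_le_of_lt hj)
      rw [Nat.succ_mul] at e1
      rw [Finset.mem_Icc]
      omega
  · intro hlt
    ext G
    exact ⟨dual_subset_young n t k ht hlt G, young_subset_dual n t k ht hlt G⟩
end

section
/- Let n, t, k be positive integers with n > kt. A subset G ⊆ [n] is a facet (maximal face) of Δ_{n,t}^{[k]} if and only if [n]∖G is a union of k pairwise disjoint intervals of the form {b, b+1, …, b+t−1} ⊆ [n]; in particular every facet of Δ_{n,t}^{[k]} has cardinality n − kt. -/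
theorem card_matching (t k : ℕ) (ht : 1 ≤ t) (b : Fin k → ℕ)
    (hd : ∀ i j : Fin k, i ≠ j → Disjoint (pathInterval (b i) t) (pathInterval (b j) t)) :
    (Finset.univ.biUnion (fun j => pathInterval (b j) t)).card = k * t := by
  rw [Finset.card_biUnion (fun i _ j _ hij => hd i j hij)]
  have h : ∀ j : Fin k, (pathInterval (b j) t).card = t := by
    intro j
    simp only [pathInterval, Nat.card_Icc]
    omega
  simp [h]

theorem matching_subset (n t k : ℕ) (b : Fin k → ℕ)
    (hb : ∀ j, 1 ≤ b j ∧ b j + t - 1 ≤ n) :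
    Finset.univ.biUnion (fun j => pathInterval (b j) t) ⊆ Finset.Icc 1 n := by
  rw [Finset.biUnion_subset]
  intro j _
  exact Finset.Icc_subset_Icc (hb j).1 (hb j).2

/-- For `n > kt`, a subset `G ⊆ [n]` is a facet of `Δ_{n,t}^{[k]}` iff `[n] ∖ G` is a
union of `k` pairwise disjoint intervals `{b, …, b+t-1} ⊆ [n]`; in particular every
facet has cardinality `n - kt`. -/
theorem isFacet_dualComplex_iff (n t k : ℕ) (hn : 1 ≤ n) (ht : 1 ≤ t) (hk : 1 ≤ k)
    (hkt : k * t < n) (G : Finset ℕ) (hG : G ⊆ Finset.Icc 1 n) :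
    (isFacet (dualComplex n t k) G ↔
      ∃ b : Fin k → ℕ,
        (∀ j, 1 ≤ b j ∧ b j + t - 1 ≤ n) ∧
        (∀ i j : Fin k, i ≠ j →
          Disjoint (pathInterval (b i) t) (pathInterval (b j) t)) ∧
        Finset.Icc 1 n \ G = Finset.univ.biUnion (fun j => pathInterval (b j) t)) ∧
    (isFacet (dualComplex n t k) G → G.card = n - k * t) := by
  have key : isFacet (dualComplex n t k) G →
      ∃ b : Fin k → ℕ,
        (∀ j, 1 ≤ b j ∧ b j + t - 1 ≤ n) ∧
        (∀ i j : Fin k, i ≠ j →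
          Disjoint (pathInterval (b i) t) (pathInterval (b j) t)) ∧
        Finset.Icc 1 n \ G = Finset.univ.biUnion (fun j => pathInterval (b j) t) := by
    rintro ⟨⟨F, hF, ⟨b, hb, hd, hs⟩, rfl⟩, hmax⟩
    refine ⟨b, hb, hd, ?_⟩
    have hU := matching_subset n t k b hb
    have h := hmax (Finset.Icc 1 n \ Finset.univ.biUnion (fun j => pathInterval (b j) t))
      ⟨_, hU, ⟨b, hb, hd, fun j =>
        Finset.subset_biUnion_of_mem (fun j => pathInterval (b j) t) (Finset.mem_univ j)⟩, rfl⟩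
      (Finset.sdiff_subset_sdiff (Finset.Subset.refl _)
        (Finset.biUnion_subset.2 (fun j _ => hs j)))
    rw [← h, Finset.sdiff_sdiff_eq_self hU]
  refine ⟨⟨key, ?_⟩, ?_⟩
  · rintro ⟨b, hb, hd, hU⟩
    refine ⟨⟨Finset.Icc 1 n \ G, Finset.sdiff_subset, ⟨b, hb, hd, fun j => ?_⟩,
      (Finset.sdiff_sdiff_eq_self hG).symm⟩, ?_⟩
    · rw [hU]
      exact Finset.subset_biUnion_of_mem (fun j => pathInterval (b j) t) (Finset.mem_univ j)
    · rintro G' ⟨F', hF', ⟨b', hb', hd', hs'⟩, rfl⟩ hGG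
      have hsub : F' ⊆ Finset.Icc 1 n \ G := by
        intro x hx
        rw [Finset.mem_sdiff]
        exact ⟨hF' hx, fun hxG => (Finset.mem_sdiff.1 (hGG hxG)).2 hx⟩
      have hc : (Finset.Icc 1 n \ G).card ≤ F'.card := by
        rw [hU, card_matching t k ht b hd, ← card_matching t k ht b' hd']
        exact Finset.card_le_card (Finset.biUnion_subset.2 (fun j _ => hs' j))
      rw [Finset.eq_of_subset_of_card_le hsub hc, Finset.sdiff_sdiff_eq_self hG]
  · intro h
    obtain ⟨b, hb, hd, hU⟩ := key h
    have h1 := Finset.card_sdiff_add_card_eq_card hG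
    rw [hU, card_matching t k ht b hd, Nat.card_Icc] at h1
    omega
end

section
/- Let t ≥ 1 be an integer and λ = (λ_1 ≥ λ_2 ≥ ⋯ ≥ λ_r ≥ 1) a partition with r ≥ 2 parts, and set n = (r−1)t + λ_1. Then every facet (maximal face) of the t-Young complex Δ_t^λ is a facet of Δ_{n,t}^{[r−1]}; in particular Δ_t^λ ⊆ Δ_{n,t}^{[r−1]} and the set of facets of Δ_t^λ is contained in the set of facets of Δ_{n,t}^{[r−1]}. -/
theorem matching_card {n t k : ℕ} {F : Finset ℕ} (h : containsMatching n t k F) (ht : 1 ≤ t) :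
    k * t ≤ F.card := by
  obtain ⟨b, hb, hd, hs⟩ := h
  have h1 : (Finset.univ.biUnion fun j => pathInterval (b j) t) ⊆ F := by
    intro x hx
    simp only [Finset.mem_biUnion] at hx
    obtain ⟨j, _, hj⟩ := hx
    exact hs j hj
  have h2 := Finset.card_le_card h1
  rw [Finset.card_biUnion (fun i _ j _ hij => hd i j hij)] at h2
  have h3 : ∀ j, (pathInterval (b j) t).card = t := by
    intro j
    simp only [pathInterval, Nat.card_Icc]
    omega
  simpa [h3] using h2

theorem dual_card {t k l : ℕ} (ht : 1 ≤ t) {G : Finset ℕ} (h : G ∈ dualComplex (k * t + l) t k) :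
    G.card ≤ l := by
  obtain ⟨F, hF, hm, rfl⟩ := h
  have := matching_card hm ht
  rw [Finset.card_sdiff_of_subset hF, Nat.card_Icc]
  omega

theorem young_subset_dual_s7 {t r : ℕ} {lam : ℕ → ℕ} (ht : 1 ≤ t) :
    youngComplex t r lam ⊆ dualComplex ((r - 1) * t + lam 1) t (r - 1) := by
  rintro G ⟨a, hlt, hcol, hG⟩
  have hc : ∀ i, ∃ c, 1 ≤ i → i ≤ lam 1 → c ≤ r - 1 ∧ a i = c * t + i := by
    intro i
    by_cases hi : 1 ≤ i ∧ i ≤ lam 1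
    · obtain ⟨j, h1, h2, _, h4⟩ := hcol i hi.1 hi.2
      exact ⟨r - j, fun _ _ => ⟨by omega, h4⟩⟩
    · exact ⟨0, fun h1 h2 => absurd ⟨h1, h2⟩ hi⟩
  choose c hc using hc
  have hmono : ∀ i j, 1 ≤ i → i ≤ j → j ≤ lam 1 → c i ≤ c j := by
    intro i j hi hij
    induction j, hij using Nat.le_induction with
    | base => intro _; exact le_rfl
    | succ j hij ih =>
      intro hj
      refine (ih (by omega)).trans ?_
      have h1 := (hc j (by omega) (by omega)).2
      have h2 := (hc (j + 1) (by omega) (by omega)).2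
      have h3 := hlt j (by omega) (by omega)
      refine Nat.le_of_mul_le_mul_right (c := t) ?_ ht
      omega
  let m : ℕ → ℕ := fun k => Nat.findGreatest (fun i => 1 ≤ i ∧ c i ≤ k) (lam 1)
  have hm1 : ∀ k, m k ≤ lam 1 := fun k => Nat.findGreatest_le _
  have hm2 : ∀ k i, 1 ≤ i → i ≤ m k → c i ≤ k := by
    intro k i hi him
    have : 1 ≤ m k ∧ c (m k) ≤ k :=
      Nat.findGreatest_of_ne_zero (P := fun i => 1 ≤ i ∧ c i ≤ k) (n := lam 1) rfl
        (by show m k ≠ 0; omega)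
    exact (hmono i (m k) hi him (hm1 k)).trans this.2
  have hm3 : ∀ k i, m k < i → i ≤ lam 1 → k < c i := by
    intro k i him hi
    have : ¬ (1 ≤ i ∧ c i ≤ k) := Nat.findGreatest_is_greatest him hi
    omega
  have hm4 : ∀ k k', k ≤ k' → m k ≤ m k' := by
    intro k k' hk
    by_contra hcon
    have h1 := hm3 k' (m k) (by omega) (hm1 k)
    have h2 := hm2 k (m k) (by omega) le_rfl
    omega
  have hGI : G ⊆ Finset.Icc 1 ((r - 1) * t + lam 1) := by
    intro x hx
    obtain ⟨i, hi, rfl⟩ := Finset.mem_image.1 (hG hx)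
    rw [Finset.mem_Icc] at hi ⊢
    obtain ⟨h1, h2⟩ := hc i hi.1 hi.2
    have := Nat.mul_le_mul_right t h1
    omega
  refine ⟨Finset.Icc 1 ((r - 1) * t + lam 1) \ G, Finset.sdiff_subset, ?_, ?_⟩
  · have hb : ∀ k : Fin (r - 1), (k.1 + 1) * t + m k ≤ (r - 1) * t + lam 1 := by
      intro k
      have := Nat.mul_le_mul_right t (show k.1 + 1 ≤ r - 1 from k.2)
      have := hm1 k
      omega
    have hdis : ∀ i j : Fin (r - 1), i < j →
        Disjoint (pathInterval (i.1 * t + m i + 1) t) (pathInterval (j.1 * t + m j + 1) t) := by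
      intro i j hij
      rw [Finset.disjoint_left]
      intro x hx hy
      simp only [pathInterval, Finset.mem_Icc] at hx hy
      have h1 := Nat.mul_le_mul_right t (show i.1 + 1 ≤ j.1 from hij)
      have h2 := hm4 i.1 j.1 (le_of_lt hij)
      rw [Nat.add_mul] at h1
      omega
    refine ⟨fun k => k.1 * t + m k + 1, ?_, ?_, ?_⟩
    · intro k
      have := hb k
      rw [Nat.add_mul] at this
      dsimp only
      omega
    · intro i j hij
      rcases lt_or_gt_of_ne hij with h | h
      · exact hdis i j h
      · exact (hdis j i h).symm
    · intro k x hx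
      simp only [pathInterval, Finset.mem_Icc] at hx
      have hbk := hb k
      rw [Nat.add_mul] at hbk
      rw [Finset.mem_sdiff, Finset.mem_Icc]
      refine ⟨by omega, fun hxG => ?_⟩
      obtain ⟨i, hi, rfl⟩ := Finset.mem_image.1 (hG hxG)
      rw [Finset.mem_Icc] at hi
      obtain ⟨-, h2⟩ := hc i hi.1 hi.2
      rcases Nat.lt_or_ge (m k) i with h | h
      · have h5 := Nat.mul_le_mul_right t (show k.1 + 1 ≤ c i from hm3 k i h hi.2)
        rw [Nat.add_mul] at h5
        omega
      · have h5 := Nat.mul_le_mul_right t (hm2 k i hi.1 h)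
        omega
  · rw [Finset.sdiff_sdiff_eq_self hGI]

theorem young_facet_card {t r : ℕ} {lam : ℕ → ℕ} {G : Finset ℕ}
    (h : isFacet (youngComplex t r lam) G) : G.card = lam 1 := by
  obtain ⟨⟨a, hlt, hcol, hG⟩, hmax⟩ := h
  rw [← hmax _ ⟨a, hlt, hcol, subset_rfl⟩ hG, Finset.card_image_of_injOn]
  · simp
  · have hmono : ∀ i j, 1 ≤ i → i + 1 ≤ j → j ≤ lam 1 → a i < a j := by
      intro i j hi hij
      induction j, hij using Nat.le_induction with
      | base => intro h; exact hlt i hi (by omega)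
      | succ j hij ih =>
        intro hj
        exact (ih (by omega)).trans (hlt j (by omega) (by omega))
    intro i hi j hj hij
    simp only [Finset.coe_Icc, Set.mem_Icc] at hi hj
    rcases lt_trichotomy i j with h | h | h
    · have := hmono i j hi.1 h hj.2
      omega
    · exact h
    · have := hmono j i hj.1 h hi.2
      omega

/-- For a partition `λ` with `r ≥ 2` parts and `n = (r-1)t + λ_1`, every facet of the
`t`-Young complex `Δ_t^λ` is a facet of `Δ_{n,t}^{[r-1]}`; in particular
`Δ_t^λ ⊆ Δ_{n,t}^{[r-1]}`. -/
theorem youngComplex_facets_subset (t r : ℕ) (lam : ℕ → ℕ) (ht : 1 ≤ t) (hr : 2 ≤ r)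
    (hlam : isPartition r lam) :
    (∀ G, isFacet (youngComplex t r lam) G →
        isFacet (dualComplex ((r - 1) * t + lam 1) t (r - 1)) G) ∧
    youngComplex t r lam ⊆ dualComplex ((r - 1) * t + lam 1) t (r - 1) := by
  refine ⟨fun G hG => ⟨young_subset_dual_s7 ht hG.1, fun G' hG' hsub => ?_⟩, young_subset_dual_s7 ht⟩
  have h1 := dual_card ht hG'
  have h2 := young_facet_card hG
  exact (Finset.eq_of_subset_of_card_le hsub (by omega)).symm
end

section
/- For every integer t ≥ 1 and every partition λ = (λ_1 ≥ λ_2 ≥ ⋯ ≥ λ_r ≥ 1), the 1-Young complex Δ_1^λ is vertex-decomposable. -/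
/-- The deletion `del_Δ(v) = {F ∈ Δ : v ∉ F}`. -/
def delC (Δ : Set (Finset ℕ)) (v : ℕ) : Set (Finset ℕ) := { F | F ∈ Δ ∧ v ∉ F }

/-- The link `lk_Δ(v) = {F ∈ Δ : v ∉ F and F ∪ {v} ∈ Δ}`. -/
def linkC (Δ : Set (Finset ℕ)) (v : ℕ) : Set (Finset ℕ) :=
  { F | F ∈ Δ ∧ v ∉ F ∧ insert v F ∈ Δ }

/-- A finite simplicial complex is vertex-decomposable if it is `{∅}`, or a simplex,
or it has a shedding vertex `v` (a vertex such that every facet of `del_Δ(v)` is a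
facet of `Δ`) with both `lk_Δ(v)` and `del_Δ(v)` vertex-decomposable. -/
inductive VertexDecomposable : Set (Finset ℕ) → Prop
  | empty : VertexDecomposable {∅}
  | simplex (S : Finset ℕ) : VertexDecomposable { F | F ⊆ S }
  | shed (Δ : Set (Finset ℕ)) (v : ℕ) :
      {v} ∈ Δ →
      (∀ G, isFacet (delC Δ v) G → isFacet Δ G) →
      VertexDecomposable (linkC Δ v) →
      VertexDecomposable (delC Δ v) →
      VertexDecomposable Δ

/-- Matroid-like complexes are vertex decomposable. -/
theorem vd_of_augment (n : ℕ) : ∀ (S : Finset ℕ) (Δ : Set (Finset ℕ)), S.card ≤ n →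
    (∅ ∈ Δ) → (∀ F ∈ Δ, F ⊆ S) → (∀ F ∈ Δ, ∀ G, G ⊆ F → G ∈ Δ) →
    (∀ F ∈ Δ, ∀ G ∈ Δ, F.card < G.card → ∃ x ∈ G, x ∉ F ∧ insert x F ∈ Δ) →
    VertexDecomposable Δ := by
  induction n with
  | zero =>
    intro S Δ hS h0 hsub hdown haug
    have hS' : S = ∅ := by simpa using hS
    have : Δ = {∅} := by
      ext F
      constructor
      · intro hF
        have := hsub F hF
        rw [hS'] at this
        simpa using this
      · rintro rfl
        exact h0
    rw [this]
    exact VertexDecomposable.empty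
  | succ n ih =>
    intro S Δ hS h0 hsub hdown haug
    by_cases hv : ∃ v ∈ S, {v} ∉ Δ
    · obtain ⟨v, hvS, hvΔ⟩ := hv
      refine ih (S.erase v) Δ ?_ h0 ?_ hdown haug
      · rw [Finset.card_erase_of_mem hvS]; omega
      · intro F hF x hx
        refine Finset.mem_erase.2 ⟨?_, hsub F hF hx⟩
        rintro rfl
        exact hvΔ (hdown F hF _ (by simpa using hx))
    push Not at hv
    by_cases hSΔ : S ∈ Δ
    · have : Δ = {F | F ⊆ S} := by
        ext F
        exact ⟨fun h => hsub F h, fun h => hdown S hSΔ F h⟩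
      rw [this]
      exact VertexDecomposable.simplex S
    -- a face of maximal cardinality
    have hfin : Δ.Finite := (S.powerset.finite_toSet).subset (by
      intro F hF; simpa using hsub F hF)
    obtain ⟨B, hB, hmax⟩ := Set.exists_max_image Δ Finset.card hfin ⟨∅, h0⟩
    have hBS : ∃ v ∈ S, v ∉ B := by
      by_contra hcon
      push Not at hcon
      have : B = S := Finset.Subset.antisymm (hsub B hB) hcon
      exact hSΔ (this ▸ hB)
    obtain ⟨v, hvS, hvB⟩ := hBS
    have hcard : (S.erase v).card ≤ n := by
      rw [Finset.card_erase_of_mem hvS]; omega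
    refine VertexDecomposable.shed Δ v (hv v hvS) ?_ ?_ ?_
    · rintro G ⟨⟨hG, hvG⟩, hGmax⟩
      refine ⟨hG, fun G' hG' hsubG => ?_⟩
      have hle : B.card ≤ G.card := by
        by_contra hlt
        push Not at hlt
        obtain ⟨x, hxB, hxG, hins⟩ := haug G hG B hB hlt
        have := hGmax (insert x G) ⟨hins, by
          simp only [Finset.mem_insert, not_or]
          exact ⟨fun h => hvB (h ▸ hxB), hvG⟩⟩ (Finset.subset_insert _ _)
        exact hxG (this ▸ Finset.mem_insert_self x G)
      exact (Finset.eq_of_subset_of_card_le hsubG ((hmax G' hG').trans hle)).symm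
    · refine ih (S.erase v) _ hcard ?_ ?_ ?_ ?_
      · exact ⟨h0, by simp, by simpa using hv v hvS⟩
      · rintro F ⟨hF, hvF, -⟩
        exact Finset.subset_erase.2 ⟨hsub F hF, hvF⟩
      · rintro F ⟨hF, hvF, hins⟩ G hGF
        exact ⟨hdown F hF G hGF, fun h => hvF (hGF h),
          hdown _ hins _ (Finset.insert_subset_insert v hGF)⟩
      · rintro F ⟨hF, hvF, hFi⟩ G ⟨hG, hvG, hGi⟩ hlt
        obtain ⟨x, hx, hxF, hins⟩ := haug _ hFi _ hGi (by
          rw [Finset.card_insert_of_notMem hvF, Finset.card_insert_of_notMem hvG]; omega)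
        rw [Finset.mem_insert, not_or] at hxF
        have hxG : x ∈ G := by
          rcases Finset.mem_insert.1 hx with h | h
          · exact absurd h hxF.1
          · exact h
        rw [Finset.insert_comm] at hins
        refine ⟨x, hxG, hxF.2, hdown _ hins _ (Finset.subset_insert _ _), ?_, hins⟩
        rw [Finset.mem_insert, not_or]
        exact ⟨fun h => hxF.1 h.symm, hvF⟩
    · refine ih (S.erase v) _ hcard ⟨h0, by simp⟩ ?_ ?_ ?_
      · rintro F ⟨hF, hvF⟩
        exact Finset.subset_erase.2 ⟨hsub F hF, hvF⟩
      · rintro F ⟨hF, hvF⟩ G hGF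
        exact ⟨hdown F hF G hGF, fun h => hvF (hGF h)⟩
      · rintro F ⟨hF, hvF⟩ G ⟨hG, hvG⟩ hlt
        obtain ⟨x, hx, hxF, hins⟩ := haug F hF G hG hlt
        refine ⟨x, hx, hxF, hins, ?_⟩
        rw [Finset.mem_insert, not_or]
        exact ⟨fun h => hvG (h ▸ hx), hvF⟩

/-- number of elements below `q` -/
def cntBelow (B : Finset ℕ) (q : ℕ) : ℕ := (B.filter (· < q)).card

theorem cntBelow_zero (B : Finset ℕ) : cntBelow B 0 = 0 := by simp [cntBelow]

theorem cntBelow_succ (B : Finset ℕ) (q : ℕ) :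
    cntBelow B (q + 1) = cntBelow B q + if q ∈ B then 1 else 0 := by
  unfold cntBelow
  split_ifs with h
  · have : B.filter (· < q + 1) = insert q (B.filter (· < q)) := by
      ext x
      simp only [Finset.mem_filter, Finset.mem_insert]
      constructor
      · rintro ⟨h1, h2⟩
        by_cases hx : x = q
        · exact Or.inl hx
        · exact Or.inr ⟨h1, by omega⟩
      · rintro (rfl | ⟨h1, h2⟩)
        · exact ⟨h, by omega⟩
        · exact ⟨h1, by omega⟩
    rw [this, Finset.card_insert_of_notMem (by simp)]
  · congr 1
    ext x
    simp only [Finset.mem_filter]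
    constructor
    · rintro ⟨h1, h2⟩
      have : x ≠ q := by rintro rfl; exact h h1
      exact ⟨h1, by omega⟩
    · rintro ⟨h1, h2⟩
      exact ⟨h1, by omega⟩

theorem cntBelow_exchange (B : Finset ℕ) (x y q : ℕ) (hx : x ∈ B) (hy : y ∉ B) :
    cntBelow (insert y (B.erase x)) q + (if x < q then 1 else 0) =
      cntBelow B q + if y < q then 1 else 0 := by
  have hxy : x ≠ y := by rintro rfl; exact hy hx
  induction q with
  | zero => simp [cntBelow_zero]
  | succ q ih =>
    rw [cntBelow_succ, cntBelow_succ]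
    simp only [Finset.mem_insert, Finset.mem_erase]
    by_cases h1 : q = x
    · subst h1
      split_ifs at * <;> first | omega | simp_all
    · by_cases h2 : q = y
      · subst h2
        split_ifs at * <;> first | omega | simp_all
      · split_ifs at * <;> first | omega | simp_all

/-- bases described by two bounding lattice paths -/
def latBase (N m : ℕ) (u l : ℕ → ℕ) (B : Finset ℕ) : Prop :=
  (∀ x ∈ B, x < N) ∧ B.card = m ∧ ∀ q, u q ≤ cntBelow B q ∧ cntBelow B q ≤ l q

theorem cntBelow_top {B : Finset ℕ} {N : ℕ} (h : ∀ x ∈ B, x < N) : cntBelow B N = B.card := by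
  unfold cntBelow
  rw [Finset.filter_true_of_mem h]

theorem latBase_exchange {N m : ℕ} {u l : ℕ → ℕ} {B C : Finset ℕ}
    (hB : latBase N m u l B) (hC : latBase N m u l C) {x : ℕ} (hxB : x ∈ B) (hxC : x ∉ C) :
    ∃ y ∈ C, y ∉ B ∧ latBase N m u l (insert y (B.erase x)) := by
  have key : ∃ y ∈ C, y ∉ B ∧ ∀ q, (x < q → q ≤ y → cntBelow C q < cntBelow B q) ∧
      (y < q → q ≤ x → cntBelow B q < cntBelow C q) := by
    have hsB := cntBelow_succ B
    have hsC := cntBelow_succ C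
    have hx1 := hsB x
    have hx2 := hsC x
    rw [if_pos hxB] at hx1
    rw [if_neg hxC] at hx2
    have hN : cntBelow B N = cntBelow C N := by
      rw [cntBelow_top hB.1, cntBelow_top hC.1, hB.2.1, hC.2.1]
    by_cases hD : cntBelow C (x + 1) < cntBelow B (x + 1)
    · have hex : ∃ y, x < y ∧ cntBelow B (y + 1) ≤ cntBelow C (y + 1) := by
        have hxN := hB.1 x hxB
        have : N ≠ x + 1 := by rintro rfl; omega
        refine ⟨N - 1, by omega, ?_⟩
        rw [Nat.sub_add_cancel (by omega)]
        exact hN.le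
      classical
      obtain ⟨hy1, hy2⟩ := Nat.find_spec hex
      have hmin := fun k => @Nat.find_min _ _ hex k
      set y := Nat.find hex
      have hlow : ∀ q, x < q → q ≤ y → cntBelow C q < cntBelow B q := by
        intro q h1 h2
        by_cases hq : q = x + 1
        · rw [hq]; exact hD
        · have := hmin (q - 1) (by omega)
          rw [Nat.sub_add_cancel (by omega)] at this
          by_contra hcon
          exact this ⟨by omega, by omega⟩
      have h3 := hlow y hy1 le_rfl
      have h4 := hsB y
      have h5 := hsC y
      refine ⟨y, ?_, ?_, fun q => ⟨hlow q, fun h1 h2 => by omega⟩⟩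
      · by_contra hcon
        rw [if_neg hcon] at h5
        omega
      · intro hcon
        rw [if_pos hcon] at h4
        split_ifs at h5 <;> omega
    · -- go left
      have hex : ∃ k, k ≤ x ∧ cntBelow C (x - k) ≤ cntBelow B (x - k) :=
        ⟨x, le_rfl, by simp [cntBelow_zero]⟩
      classical
      obtain ⟨hk1, hk2⟩ := Nat.find_spec hex
      have hmin := fun k => @Nat.find_min _ _ hex k
      set k := Nat.find hex
      have hlow : ∀ q, x - k < q → q ≤ x → cntBelow B q < cntBelow C q := by
        intro q h1 h2
        have := hmin (x - q) (by omega)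
        rw [Nat.sub_sub_self h2] at this
        by_contra hcon
        exact this ⟨by omega, by omega⟩
      have hk0 : k ≠ 0 := by
        intro h
        rw [h] at hk2
        simp only [Nat.sub_zero] at hk2
        omega
      have h3 := hlow (x - k + 1) (by omega) (by omega)
      have h4 := hsB (x - k)
      have h5 := hsC (x - k)
      refine ⟨x - k, ?_, ?_, fun q => ⟨fun h1 h2 => by omega, hlow q⟩⟩
      · by_contra hcon
        rw [if_neg hcon] at h5
        omega
      · intro hcon
        rw [if_pos hcon] at h4
        split_ifs at h5 <;> omega
  obtain ⟨y, hyC, hyB, hy⟩ := key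
  refine ⟨y, hyC, hyB, ?_, ?_, ?_⟩
  · intro z hz
    rcases Finset.mem_insert.1 hz with rfl | hz
    · exact hC.1 _ hyC
    · exact hB.1 _ (Finset.mem_of_mem_erase hz)
  · rw [Finset.card_insert_of_notMem (fun h => hyB (Finset.mem_of_mem_erase h)),
      Finset.card_erase_of_mem hxB, hB.2.1]
    have : 0 < B.card := Finset.card_pos.2 ⟨x, hxB⟩
    have := hB.2.1
    omega
  · intro q
    have h1 := cntBelow_exchange B x y q hxB hyB
    have h2 := hB.2.2 q
    have h3 := hC.2.2 q
    obtain ⟨h4, h5⟩ := hy q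
    split_ifs at h1 <;> omega

theorem latBase_augment {N m : ℕ} {u l : ℕ → ℕ} {F G : Finset ℕ}
    (hF : ∃ B, latBase N m u l B ∧ F ⊆ B) (hG : ∃ B, latBase N m u l B ∧ G ⊆ B)
    (hlt : F.card < G.card) :
    ∃ x ∈ G, x ∉ F ∧ ∃ B, latBase N m u l B ∧ insert x F ⊆ B := by
  classical
  let P : Set ℕ → Prop := fun X => ∃ B : Finset ℕ, (B : Set ℕ) = X ∧ latBase N m u l B
  have hexch : Matroid.ExchangeProperty P := by
    rintro X Y ⟨B, rfl, hB⟩ ⟨C, rfl, hC⟩ a ⟨haB, haC⟩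
    obtain ⟨y, hyC, hyB, h⟩ := latBase_exchange hB hC (by simpa using haB) (by simpa using haC)
    exact ⟨y, ⟨by simpa using hyC, by simpa using hyB⟩, _, by simp, h⟩
  have hne : ∃ X, P X ∧ X.Finite := by
    obtain ⟨B, hB, -⟩ := hF
    exact ⟨B, ⟨B, rfl, hB⟩, B.finite_toSet⟩
  let M := Matroid.ofExistsFiniteIsBase Set.univ P hne hexch (fun _ _ => Set.subset_univ _)
  have hM : ∀ H : Finset ℕ, M.Indep H ↔ ∃ B, latBase N m u l B ∧ H ⊆ B := by
    intro H
    rw [Matroid.indep_iff]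
    constructor
    · rintro ⟨X, ⟨B, rfl, hB⟩, hH⟩
      exact ⟨B, hB, by simpa using hH⟩
    · rintro ⟨B, hB, hH⟩
      exact ⟨B, ⟨B, rfl, hB⟩, by simpa using hH⟩
  obtain ⟨e, he, heF, hi⟩ := ((hM F).2 hF).augment_finset ((hM G).2 hG) hlt
  refine ⟨e, he, heF, (hM _).1 ?_⟩
  simpa using hi

/-- counting function of the values of `L` on `1..m` -/
def cntFun (m : ℕ) (L : ℕ → ℕ) (q : ℕ) : ℕ := ((Finset.Icc 1 m).filter (fun i => L i < q)).card

theorem lt_of_step {m : ℕ} {a : ℕ → ℕ} (h : ∀ i, 1 ≤ i → i < m → a i < a (i + 1)) :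
    ∀ i j, 1 ≤ i → i < j → j ≤ m → a i < a j := by
  intro i j hi hij
  induction j, hij using Nat.le_induction with
  | base => intro hj; exact h i hi (by omega)
  | succ j hj ih =>
    intro hjm
    exact (ih (by omega)).trans (h j (by omega) (by omega))

theorem cntBelow_image {m : ℕ} {a : ℕ → ℕ} (h : ∀ i j, 1 ≤ i → i < j → j ≤ m → a i < a j)
    (q : ℕ) : cntBelow (Finset.image a (Finset.Icc 1 m)) q = cntFun m a q ∧
      (Finset.image a (Finset.Icc 1 m)).card = m := by
  have hinj : Set.InjOn a (Finset.Icc 1 m : Finset ℕ) := by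
    intro i hi j hj hij
    simp only [Finset.coe_Icc, Set.mem_Icc] at hi hj
    rcases lt_trichotomy i j with h1 | h1 | h1
    · have := h i j hi.1 h1 hj.2; omega
    · exact h1
    · have := h j i hj.1 h1 hi.2; omega
  constructor
  · unfold cntBelow cntFun
    rw [Finset.filter_image, Finset.card_image_of_injOn]
    exact hinj.mono (by
      intro i hi
      exact Finset.mem_coe.2 (Finset.mem_of_mem_filter i (Finset.mem_coe.1 hi)))
  · rw [Finset.card_image_of_injOn hinj]; simp

theorem latBase_iff {N m : ℕ} {L U : ℕ → ℕ}
    (hL : ∀ i j, 1 ≤ i → i < j → j ≤ m → L i < L j)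
    (hU : ∀ i j, 1 ≤ i → i < j → j ≤ m → U i < U j)
    (hUN : ∀ i, 1 ≤ i → i ≤ m → U i < N) (B : Finset ℕ) :
    latBase N m (cntFun m U) (cntFun m L) B ↔
      ∃ a : ℕ → ℕ, (∀ i, 1 ≤ i → i < m → a i < a (i + 1)) ∧
        (∀ i, 1 ≤ i → i ≤ m → L i ≤ a i ∧ a i ≤ U i) ∧ B = Finset.image a (Finset.Icc 1 m) := by
  constructor
  · rintro ⟨hBN, hcard, hq⟩
    let a : ℕ → ℕ := fun i => if h : i - 1 < m then B.orderEmbOfFin hcard ⟨i - 1, h⟩ else 0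
    have ha : ∀ i j, 1 ≤ i → i < j → j ≤ m → a i < a j := by
      intro i j hi hij hj
      have h1 : i - 1 < m := by omega
      have h2 : j - 1 < m := by omega
      simp only [a, h1, h2, dif_pos, OrderEmbedding.lt_iff_lt, Fin.mk_lt_mk]
      omega
    have himg : B = Finset.image a (Finset.Icc 1 m) := by
      symm
      apply Finset.eq_of_subset_of_card_le
      · intro x hx
        obtain ⟨i, hi, rfl⟩ := Finset.mem_image.1 hx
        rw [Finset.mem_Icc] at hi
        have h1 : i - 1 < m := by omega
        simp only [a, h1, dif_pos]
        exact Finset.orderEmbOfFin_mem _ _ _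
      · rw [(cntBelow_image ha 0).2, hcard]
    have hcnt : ∀ q, cntBelow B q = cntFun m a q := by
      intro q
      rw [himg]
      exact (cntBelow_image ha q).1
    -- comparison lemma
    have hcmp : ∀ (f g : ℕ → ℕ), (∀ i j, 1 ≤ i → i < j → j ≤ m → f i < f j) →
        (∀ i j, 1 ≤ i → i < j → j ≤ m → g i < g j) → (∀ q, cntFun m f q ≤ cntFun m g q) →
        ∀ i, 1 ≤ i → i ≤ m → g i ≤ f i := by
      intro f g hf hg hfg i hi him
      by_contra hcon
      push Not at hcon
      have h1 : i ≤ cntFun m f (f i + 1) := by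
        have : Finset.Icc 1 i ⊆ (Finset.Icc 1 m).filter (fun j => f j < f i + 1) := by
          intro j hj
          rw [Finset.mem_Icc] at hj
          rw [Finset.mem_filter, Finset.mem_Icc]
          refine ⟨⟨hj.1, by omega⟩, ?_⟩
          rcases hj.2.lt_or_eq with h | h
          · have := hf j i hj.1 h him; omega
          · rw [h]; omega
        have := Finset.card_le_card this
        simpa [cntFun] using this
      have h2 : cntFun m g (f i + 1) ≤ i - 1 := by
        have : (Finset.Icc 1 m).filter (fun j => g j < f i + 1) ⊆ Finset.Icc 1 (i - 1) := by
          intro j hj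
          rw [Finset.mem_filter, Finset.mem_Icc] at hj
          rw [Finset.mem_Icc]
          refine ⟨hj.1.1, ?_⟩
          by_contra hc
          rcases (show i ≤ j by omega).lt_or_eq with h | h
          · have := hg i j hi h hj.1.2; omega
          · rw [← h] at hj; omega
        have := Finset.card_le_card this
        simpa [cntFun] using this
      have := hfg (f i + 1)
      omega
    refine ⟨a, fun i h1 h2 => ha i (i + 1) h1 (by omega) (by omega), fun i h1 h2 => ⟨?_, ?_⟩, himg⟩
    · exact hcmp a L ha hL (fun q => by rw [← hcnt]; exact (hq q).2) i h1 h2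
    · exact hcmp U a hU ha (fun q => by rw [← hcnt]; exact (hq q).1) i h1 h2
  · rintro ⟨a, hstep, hLU, rfl⟩
    have ha := lt_of_step hstep
    refine ⟨?_, (cntBelow_image ha 0).2, fun q => ?_⟩
    · intro x hx
      obtain ⟨i, hi, rfl⟩ := Finset.mem_image.1 hx
      rw [Finset.mem_Icc] at hi
      exact (hLU i hi.1 hi.2).2.trans_lt (hUN i hi.1 hi.2)
    · rw [(cntBelow_image ha q).1]
      constructor
      · apply Finset.card_le_card
        intro i hi
        simp only [Finset.mem_filter, Finset.mem_Icc] at hi ⊢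
        have := hLU i hi.1.1 hi.1.2
        exact ⟨hi.1, by omega⟩
      · apply Finset.card_le_card
        intro i hi
        simp only [Finset.mem_filter, Finset.mem_Icc] at hi ⊢
        have := hLU i hi.1.1 hi.1.2
        exact ⟨hi.1, by omega⟩

/-- For every partition `λ`, the `1`-Young complex `Δ_1^λ` is vertex-decomposable. -/
theorem youngComplex_one_vertexDecomposable (r : ℕ) (lam : ℕ → ℕ) (hr : 1 ≤ r)
    (hlam : isPartition r lam) :
    VertexDecomposable (youngComplex 1 r lam) := by
  classical
  obtain ⟨-, hanti⟩ := hlam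
  set m := lam 1 with hm
  let c : ℕ → ℕ := fun i => Nat.findGreatest (fun j => i ≤ lam j) r
  have hc1 : ∀ i, i ≤ m → 1 ≤ c i := fun i hi => Nat.le_findGreatest hr hi
  have hcr : ∀ i, c i ≤ r := fun i => Nat.findGreatest_le r
  have hcs : ∀ i, i ≤ m → i ≤ lam (c i) := fun i hi =>
    Nat.findGreatest_spec (P := fun j => i ≤ lam j) hr hi
  have hcge : ∀ i j, j ≤ r → i ≤ lam j → j ≤ c i := fun i j h1 h2 => Nat.le_findGreatest h1 h2
  let L : ℕ → ℕ := fun i => r - c i + i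
  let U : ℕ → ℕ := fun i => r - 1 + i
  have hcol : ∀ i, i ≤ m → ∀ a, inColumn 1 r lam i a ↔ L i ≤ a ∧ a ≤ U i := by
    intro i hi a
    have h1 := hc1 i hi
    have h2 := hcr i
    constructor
    · rintro ⟨j, hj1, hjr, hij, rfl⟩
      have := hcge i j hjr hij
      simp only [L, U, mul_one]
      omega
    · rintro ⟨h3, h4⟩
      simp only [L, U] at h3 h4
      refine ⟨r + i - a, by omega, by omega, ?_, by omega⟩
      exact (hcs i hi).trans (hanti _ _ (by omega) (by omega) h2)
  have hL : ∀ i j, 1 ≤ i → i < j → j ≤ m → L i < L j := by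
    intro i j h1 h2 h3
    have := hcge i (c j) (hcr j) (h2.le.trans (hcs j h3))
    simp only [L]
    omega
  have hU : ∀ i j, 1 ≤ i → i < j → j ≤ m → U i < U j := by
    intro i j h1 h2 h3
    simp only [U]
    omega
  have hUN : ∀ i, 1 ≤ i → i ≤ m → U i < r + m := by
    intro i h1 h2
    simp only [U]
    omega
  have hmem : ∀ F, F ∈ youngComplex 1 r lam ↔
      ∃ B, latBase (r + m) m (cntFun m U) (cntFun m L) B ∧ F ⊆ B := by
    intro F
    constructor
    · rintro ⟨a, h1, h2, h3⟩
      exact ⟨_, (latBase_iff hL hU hUN _).2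
        ⟨a, h1, fun i hi hi' => (hcol i hi' _).1 (h2 i hi hi'), rfl⟩, h3⟩
    · rintro ⟨B, hB, hF⟩
      obtain ⟨a, h1, h2, rfl⟩ := (latBase_iff hL hU hUN _).1 hB
      exact ⟨a, h1, fun i hi hi' => (hcol i hi' _).2 (h2 i hi hi'), hF⟩
  refine vd_of_augment _ (Finset.range (r + m)) _ le_rfl ?_ ?_ ?_ ?_
  · refine ⟨U, fun i h1 h2 => hU i (i + 1) h1 (by omega) (by omega), fun i h1 h2 => ?_, by simp⟩
    rw [hcol i h2]
    have := hc1 i h2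
    refine ⟨?_, le_rfl⟩
    simp only [L, U]
    omega
  · intro F hF x hx
    obtain ⟨B, hB, hFB⟩ := (hmem F).1 hF
    exact Finset.mem_range.2 (hB.1 x (hFB hx))
  · rintro F ⟨a, h1, h2, h3⟩ G hG
    exact ⟨a, h1, h2, hG.trans h3⟩
  · intro F hF G hG hlt
    obtain ⟨x, h1, h2, h3⟩ := latBase_augment ((hmem F).1 hF) ((hmem G).1 hG) hlt
    exact ⟨x, h1, h2, (hmem _).2 h3⟩
end

section
/- Let t ≥ 2 be an integer and λ = (λ_1 ≥ λ_2 ≥ ⋯ ≥ λ_r ≥ 1) a partition. Then the t-Young complex Δ_t^λ is vertex-decomposable if and only if either r = 1, or r ≥ 2 and λ_2 ≤ t. -/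
/-! ### Obstruction to vertex-decomposability -/

/-- A disconnected link all of whose facets have at least two elements. -/
def BadC (Δ : Set (Finset ℕ)) : Prop :=
  ∃ (F : Finset ℕ) (A : Set ℕ),
    (∀ G, isFacet Δ G → F ⊆ G → 2 ≤ (G \ F).card) ∧
    (∀ G, isFacet Δ G → F ⊆ G → (∀ x ∈ G \ F, x ∈ A) ∨ (∀ x ∈ G \ F, x ∉ A)) ∧
    (∃ G ∈ Δ, F ⊆ G ∧ ∃ x ∈ G \ F, x ∈ A) ∧
    (∃ G ∈ Δ, F ⊆ G ∧ ∃ x ∈ G \ F, x ∉ A)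

def DownC (Δ : Set (Finset ℕ)) : Prop := ∀ G ∈ Δ, ∀ F, F ⊆ G → F ∈ Δ

lemma exists_facet {Δ : Set (Finset ℕ)} (hf : Δ.Finite) {G : Finset ℕ} (hG : G ∈ Δ) :
    ∃ H, isFacet Δ H ∧ G ⊆ H := by
  obtain ⟨H, hGH, hH⟩ := hf.exists_le_maximal hG
  refine ⟨H, ⟨hH.prop, fun G' hG' h => ?_⟩, hGH⟩
  exact le_antisymm (hH.le_of_ge hG' h) h

lemma bad_aux {Δ : Set (Finset ℕ)} (hf : Δ.Finite) (hd : DownC Δ) {v : ℕ} {F : Finset ℕ}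
    (hv : v ∉ F) (B : ℕ → Prop)
    (h2 : ∀ G, isFacet Δ G → F ⊆ G → 2 ≤ (G \ F).card)
    (hB : ∀ G, isFacet Δ G → F ⊆ G → (∃ x ∈ G \ F, B x) → ∀ x ∈ G \ F, B x)
    (hG : ∃ G ∈ Δ, F ⊆ G ∧ ∃ x ∈ G \ F, B x) :
    ∃ G ∈ delC Δ v, F ⊆ G ∧ ∃ x ∈ G \ F, B x := by
  obtain ⟨G, hG, hFG, x, hx, hBx⟩ := hG
  obtain ⟨H, hH, hGH⟩ := exists_facet hf hG
  have hFH := hFG.trans hGH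
  have hall := hB H hH hFH ⟨x, by
    simp only [Finset.mem_sdiff] at hx ⊢; exact ⟨hGH hx.1, hx.2⟩, hBx⟩
  obtain ⟨y, hy, hyv⟩ := Finset.exists_mem_ne (by have := h2 H hH hFH; omega : 1 < (H \ F).card) v
  refine ⟨H.erase v, ⟨hd H hH.1 _ (Finset.erase_subset _ _), by simp⟩, ?_, y, ?_, hall y hy⟩
  · intro z hz
    refine Finset.mem_erase.2 ⟨?_, hFH hz⟩
    rintro rfl; exact hv hz
  · simp only [Finset.mem_sdiff, Finset.mem_erase] at hy ⊢
    exact ⟨⟨hyv, hy.1⟩, hy.2⟩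

lemma not_bad_of_vd {Δ : Set (Finset ℕ)} (h : VertexDecomposable Δ) :
    Δ.Finite → DownC Δ → ¬ BadC Δ := by
  induction h with
  | empty =>
    rintro - - ⟨F, A, -, -, ⟨G, hG, -, x, hx, -⟩, -⟩
    rw [Set.mem_singleton_iff] at hG
    subst hG; simp at hx
  | simplex S =>
    rintro - - ⟨F, A, -, h, ⟨G, hG, hFG, x, hx, hxA⟩, ⟨G', hG', hFG', y, hy, hyA⟩⟩
    have hS : isFacet {F | F ⊆ S} S := ⟨fun _ h => h, fun G' h h' => le_antisymm h h'⟩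
    simp only [Finset.mem_sdiff, Set.mem_ofPred_eq] at *
    rcases h S hS (hFG.trans hG) with h | h
    · exact hyA (h y ⟨hG' hy.1, hy.2⟩)
    · exact h x ⟨hG hx.1, hx.2⟩ hxA
  | shed Δ v hv hshed hl hdel ihl ihd =>
    rintro hf hd ⟨F, A, h2, hA, hG1, hG2⟩
    by_cases hvF : v ∈ F
    · refine ihl (hf.subset fun G h => h.1) (fun G hG F' hF => ⟨hd G hG.1 F' hF,
        fun h => hG.2.1 (hF h), hd _ hG.2.2 _ (Finset.insert_subset_insert _ hF)⟩) ?_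
      have key : ∀ G, isFacet (linkC Δ v) G → F.erase v ⊆ G →
          isFacet Δ (insert v G) ∧ F ⊆ insert v G ∧ (insert v G) \ F = G \ F.erase v := by
        intro G hG hFG
        refine ⟨⟨hG.1.2.2, ?_⟩, ?_, ?_⟩
        · intro G' hG' hs
          have hvG' : v ∈ G' := hs (Finset.mem_insert_self _ _)
          have := hG.2 (G'.erase v) ⟨hd _ hG' _ (Finset.erase_subset _ _), by simp,
            by rwa [Finset.insert_erase hvG']⟩ (by
              intro z hz
              refine Finset.mem_erase.2 ⟨?_, hs (Finset.mem_insert_of_mem hz)⟩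
              rintro rfl; exact hG.1.2.1 hz)
          rw [← this, Finset.insert_erase hvG']
        · intro z hz
          by_cases hzv : z = v
          · simp [hzv]
          · exact Finset.mem_insert_of_mem (hFG (Finset.mem_erase.2 ⟨hzv, hz⟩))
        · ext z
          have := hG.1.2.1
          by_cases hzv : z = v
          · subst hzv; simp [hvF, this]
          · simp [hzv]
      have key2 : ∀ G ∈ Δ, F ⊆ G → G.erase v ∈ linkC Δ v ∧ F.erase v ⊆ G.erase v ∧
          G.erase v \ F.erase v = G \ F := by
        intro G hG hFG
        refine ⟨⟨hd _ hG _ (Finset.erase_subset _ _), by simp,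
            by rwa [Finset.insert_erase (hFG hvF)]⟩, Finset.erase_subset_erase _ hFG, ?_⟩
        ext z
        by_cases hzv : z = v
        · subst hzv; simp [hvF]
        · simp [hzv]
      refine ⟨F.erase v, A, ?_, ?_, ?_, ?_⟩
      · intro G hG hFG
        obtain ⟨a, b, c⟩ := key G hG hFG
        rw [← c]; exact h2 _ a b
      · intro G hG hFG
        obtain ⟨a, b, c⟩ := key G hG hFG
        rw [← c]; exact hA _ a b
      · obtain ⟨G, hG, hFG, hx⟩ := hG1
        obtain ⟨a, b, c⟩ := key2 G hG hFG
        exact ⟨_, a, b, by rwa [c]⟩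
      · obtain ⟨G, hG, hFG, hx⟩ := hG2
        obtain ⟨a, b, c⟩ := key2 G hG hFG
        exact ⟨_, a, b, by rwa [c]⟩
    · refine ihd (hf.subset fun G h => h.1) (fun G hG F' hF => ⟨hd G hG.1 F' hF,
        fun h => hG.2 (hF h)⟩) ⟨F, A, fun G hG => h2 G (hshed G hG),
          fun G hG => hA G (hshed G hG), ?_, ?_⟩
      · refine bad_aux hf hd hvF (fun x => x ∈ A) h2 ?_ hG1
        rintro G hG hFG ⟨x, hx, hxA⟩
        rcases hA G hG hFG with h | h
        · exact h
        · exact absurd hxA (h x hx)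
      · refine bad_aux hf hd hvF (fun x => x ∉ A) h2 ?_ hG2
        rintro G hG hFG ⟨x, hx, hxA⟩
        rcases hA G hG hFG with h | h
        · exact absurd (h x hx) hxA
        · exact h

lemma young_down (t r : ℕ) (lam : ℕ → ℕ) : DownC (youngComplex t r lam) := by
  rintro G ⟨a, h1, h2, h3⟩ F hF
  exact ⟨a, h1, h2, hF.trans h3⟩

lemma young_finite (t r : ℕ) (lam : ℕ → ℕ) : (youngComplex t r lam).Finite := by
  refine (Finset.finite_toSet (Finset.range (r * t + lam 1 + 1)).powerset).subset ?_
  rintro G ⟨a, h1, h2, h3⟩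
  rw [Finset.mem_coe, Finset.mem_powerset]
  intro x hx
  obtain ⟨i, hi, rfl⟩ := Finset.mem_image.1 (h3 hx)
  rw [Finset.mem_Icc] at hi
  obtain ⟨j, hj1, hj2, -, he⟩ := h2 i hi.1 hi.2
  have : (r - j) * t ≤ r * t := Nat.mul_le_mul_right _ (Nat.sub_le _ _)
  rw [Finset.mem_range]; omega

lemma strict_of_step {n : ℕ} {a : ℕ → ℕ} (h : ∀ i, 1 ≤ i → i < n → a i < a (i + 1))
    {i j : ℕ} (hi : 1 ≤ i) (hij : i < j) (hj : j ≤ n) : a i < a j := by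
  induction j, hij using Nat.le_induction with
  | base => exact h i hi (by omega)
  | succ j hij ih => exact (ih (by omega)).trans (h j (by omega) (by omega))

lemma young_bad (t q : ℕ) (lam : ℕ → ℕ) (ht : 2 ≤ t) (h21 : lam 2 ≤ lam 1) (hl : t < lam 2) :
    BadC (youngComplex t (q + 2) lam) := by
  set n := lam 1 with hn
  set R := (q + 1) * t with hR
  have hqR : q * t + t = R := by rw [hR]; ring
  have hface : ∀ a : ℕ → ℕ, (∀ i, 1 ≤ i → i < n → a i < a (i + 1)) →
      (∀ i, 1 ≤ i → i ≤ n → inColumn t (q + 2) lam i (a i)) →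
      Finset.image a (Finset.Icc 1 n) ∈ youngComplex t (q + 2) lam :=
    fun a h1 h2 => ⟨a, h1, h2, subset_rfl⟩
  set F : Finset ℕ := insert (R + 1) (Finset.Icc (R + t + 2) (R + n)) with hF
  have main : ∀ G, isFacet (youngComplex t (q + 2) lam) G → F ⊆ G →
      2 ≤ (G \ F).card ∧ ((∀ x ∈ G \ F, x ∈ {x | x < R + 1}) ∨
        (∀ x ∈ G \ F, x ∉ {x | x < R + 1})) := by
    rintro G ⟨⟨a, h1, h2, h3⟩, hmax⟩ hFG
    have hGa := hmax _ (hface a h1 h2) h3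
    have hst : ∀ {i j : ℕ}, 1 ≤ i → i < j → j ≤ n → a i < a j :=
      fun hi hij hj => strict_of_step h1 hi hij hj
    have hv : R + 1 ∈ G := hFG (by simp [hF])
    rw [← hGa] at hv
    obtain ⟨k, hk, hak⟩ := Finset.mem_image.1 hv
    rw [Finset.mem_Icc] at hk
    obtain ⟨j, hj1, hj2, hj3, hj4⟩ := h2 k hk.1 hk.2
    by_cases hk1 : k = 1
    · subst hk1
      have hval : ∀ i, 1 ≤ i → i ≤ n → a i = R + i := by
        intro i hi hin
        obtain ⟨j', hj1', hj2', hj3', hj4'⟩ := h2 i hi hin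
        have hle : (q + 2 - j') * t ≤ R := by
          rw [hR]; exact Nat.mul_le_mul_right _ (by omega)
        have hge : R < (q + 2 - j') * t + i := by
          rw [← hj4']
          rcases hi.eq_or_lt with h | h
          · subst h; omega
          · have := hst le_rfl h hin; omega
        have hmono : ∀ i, 1 ≤ i → i ≤ n → R + i ≤ a i := by
          intro i hi
          induction i, hi using Nat.le_induction with
          | base => intro _; omega
          | succ i hi ih =>
            intro h
            have := ih (by omega)
            have := h1 i hi (by omega)
            omega
        have := hmono i hi hin
        omega
      constructor
      · have hsub : ({R + 2, R + t + 1} : Finset ℕ) ⊆ G \ F := by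
          intro x hx
          rw [← hGa]
          simp only [Finset.mem_insert, Finset.mem_singleton, Finset.mem_sdiff,
            Finset.mem_image, Finset.mem_Icc, hF] at hx ⊢
          rcases hx with rfl | rfl
          · exact ⟨⟨2, by omega, hval 2 (by omega) (by omega)⟩, by omega⟩
          · exact ⟨⟨t + 1, by omega, by rw [hval (t+1) (by omega) (by omega)]; omega⟩, by omega⟩
        have := Finset.card_le_card hsub
        rwa [Finset.card_pair (by omega)] at this
      · right
        intro x hx
        rw [← hGa] at hx
        obtain ⟨i, hi, rfl⟩ := Finset.mem_image.1 (Finset.mem_sdiff.1 hx).1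
        rw [Finset.mem_Icc] at hi
        have := hval i hi.1 hi.2
        simp only [Set.mem_ofPred_eq]
        omega
    · have hkt : t + 1 ≤ k := by
        have hlt : q + 2 - j < q + 1 := by
          by_contra hcon
          have : R ≤ (q + 2 - j) * t := by
            rw [hR]; exact Nat.mul_le_mul_right _ (by omega)
          omega
        have : (q + 2 - j) * t ≤ q * t := Nat.mul_le_mul_right _ (by omega)
        omega
      constructor
      · have hsub : ({a 1, a 2} : Finset ℕ) ⊆ G \ F := by
          intro x hx
          have l1 : a 1 < a k := hst le_rfl (by omega) hk.2
          have l2 : a 2 < a k := hst (by omega) (by omega) hk.2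
          rw [← hGa]
          simp only [Finset.mem_insert, Finset.mem_singleton, Finset.mem_sdiff,
            Finset.mem_image, Finset.mem_Icc, hF] at hx ⊢
          rcases hx with rfl | rfl
          · exact ⟨⟨1, by omega, rfl⟩, by omega⟩
          · exact ⟨⟨2, by omega, rfl⟩, by omega⟩
        have := Finset.card_le_card hsub
        have l3 : a 1 < a 2 := hst le_rfl (by omega) (by omega)
        rwa [Finset.card_pair (by omega)] at this
      · left
        have heq : Finset.Icc (R + t + 2) (R + n) = Finset.image a (Finset.Ioc k n) := by
          apply Finset.eq_of_subset_of_card_le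
          · intro x hx
            have hxG : x ∈ G := hFG (by rw [hF]; exact Finset.mem_insert_of_mem hx)
            rw [← hGa] at hxG
            obtain ⟨i, hi, rfl⟩ := Finset.mem_image.1 hxG
            rw [Finset.mem_Icc] at hi hx
            refine Finset.mem_image.2 ⟨i, Finset.mem_Ioc.2 ⟨?_, hi.2⟩, rfl⟩
            by_contra hcon
            rcases (not_lt.1 hcon).eq_or_lt with h | h
            · subst h; omega
            · have := hst hi.1 h hk.2; omega
          · refine Finset.card_image_le.trans ?_
            rw [Nat.card_Ioc, Nat.card_Icc]; omega
        intro x hx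
        obtain ⟨hxG, hxF⟩ := Finset.mem_sdiff.1 hx
        rw [← hGa] at hxG
        obtain ⟨i, hi, rfl⟩ := Finset.mem_image.1 hxG
        rw [Finset.mem_Icc] at hi
        rcases lt_trichotomy i k with h | h | h
        · have := hst hi.1 h hk.2
          simp only [Set.mem_ofPred_eq]; omega
        · subst h; exact absurd (by simp [hF, hak]) hxF
        · refine absurd ?_ hxF
          rw [hF, heq]
          exact Finset.mem_insert_of_mem
            (Finset.mem_image_of_mem _ (Finset.mem_Ioc.2 ⟨h, hi.2⟩))
  refine ⟨F, {x | x < R + 1}, fun G hG hFG => (main G hG hFG).1,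
    fun G hG hFG => (main G hG hFG).2, ?_, ?_⟩
  · refine ⟨_, hface (fun i => if i ≤ t + 1 then q * t + i else R + i) ?_ ?_, ?_,
      q * t + 1, ?_, ?_⟩
    · intro i _ _
      split_ifs <;> omega
    · intro i hi hin
      split_ifs with h
      · exact ⟨2, by omega, by omega, by omega, by simp⟩
      · exact ⟨1, by omega, by omega, by omega, by simp [hR]⟩
    · intro x hx
      simp only [hF, Finset.mem_insert, Finset.mem_Icc, Finset.mem_image] at hx ⊢
      rcases hx with rfl | hx
      · exact ⟨t + 1, by omega, by rw [if_pos le_rfl]; omega⟩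
      · exact ⟨x - R, by omega, by rw [if_neg (by omega)]; omega⟩
    · simp only [hF, Finset.mem_sdiff, Finset.mem_insert, Finset.mem_Icc, Finset.mem_image]
      exact ⟨⟨1, by omega, by rw [if_pos (by omega)]⟩, by omega⟩
    · simp only [Set.mem_ofPred_eq]; omega
  · refine ⟨_, hface (fun i => R + i) ?_ ?_, ?_, R + 2, ?_, ?_⟩
    · intro i _ _; omega
    · intro i hi hin
      exact ⟨1, by omega, by omega, by omega, by simp [hR]⟩
    · intro x hx
      simp only [hF, Finset.mem_insert, Finset.mem_Icc, Finset.mem_image] at hx ⊢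
      exact ⟨x - R, by omega, by omega⟩
    · simp only [hF, Finset.mem_sdiff, Finset.mem_insert, Finset.mem_Icc, Finset.mem_image]
      exact ⟨⟨2, by omega, rfl⟩, by omega⟩
    · simp only [Set.mem_ofPred_eq]; omega

/-! ### Vertex-decomposability when labels are distinct -/

/-- The complex generated by a family of sets. -/
def genC (𝓕 : Set (Finset ℕ)) : Set (Finset ℕ) := {F | ∃ G ∈ 𝓕, F ⊆ G}

lemma vd_shed_gen (𝓕 : Set (Finset ℕ)) (d : ℕ) (hcard : ∀ G ∈ 𝓕, G.card = d) (v : ℕ)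
    (hv : ∃ G ∈ 𝓕, v ∈ G)
    (hex : ∀ G ∈ 𝓕, v ∈ G → ∃ G' ∈ 𝓕, v ∉ G' ∧ G.erase v ⊆ G')
    (hl : VertexDecomposable (genC {G' | ∃ G ∈ 𝓕, v ∈ G ∧ G' = G.erase v}))
    (hd : VertexDecomposable (genC {G | G ∈ 𝓕 ∧ v ∉ G})) :
    VertexDecomposable (genC 𝓕) := by
  have hdel : ∀ F ∈ delC (genC 𝓕) v, ∃ G ∈ 𝓕, v ∉ G ∧ F ⊆ G := by
    rintro F ⟨⟨G, hG, hFG⟩, hvF⟩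
    by_cases hvG : v ∈ G
    · obtain ⟨G', hG', hvG', hs⟩ := hex G hG hvG
      refine ⟨G', hG', hvG', fun z hz => hs (Finset.mem_erase.2 ⟨?_, hFG hz⟩)⟩
      rintro rfl; exact hvF hz
    · exact ⟨G, hG, hvG, hFG⟩
  refine VertexDecomposable.shed _ v ?_ ?_ ?_ ?_
  · obtain ⟨G, hG, hvG⟩ := hv
    exact ⟨G, hG, by simpa using hvG⟩
  · rintro G ⟨hG, hmax⟩
    obtain ⟨G', hG', hvG', hs⟩ := hdel G hG
    have := hmax G' ⟨⟨G', hG', subset_rfl⟩, hvG'⟩ hs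
    subst this
    refine ⟨hG.1, ?_⟩
    rintro H ⟨K, hK, hHK⟩ hGH
    refine (Finset.eq_of_subset_of_card_le hGH ?_).symm
    rw [hcard _ hG', ← hcard _ hK]
    exact Finset.card_le_card hHK
  · convert hl using 1
    ext F
    constructor
    · rintro ⟨-, hvF, G, hG, hs⟩
      refine ⟨G.erase v, ⟨G, hG, hs (Finset.mem_insert_self _ _), rfl⟩, fun z hz => ?_⟩
      refine Finset.mem_erase.2 ⟨?_, hs (Finset.mem_insert_of_mem hz)⟩
      rintro rfl; exact hvF hz
    · rintro ⟨_, ⟨G, hG, hvG, rfl⟩, hs⟩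
      refine ⟨⟨G, hG, hs.trans (Finset.erase_subset _ _)⟩, fun h => by simpa using hs h,
        G, hG, ?_⟩
      exact Finset.insert_subset hvG (hs.trans (Finset.erase_subset _ _))
  · convert hd using 1
    ext F
    constructor
    · intro hF
      obtain ⟨G, a, b, c⟩ := hdel F hF
      exact ⟨G, ⟨a, b⟩, c⟩
    · rintro ⟨G, ⟨a, b⟩, c⟩
      exact ⟨⟨G, a, c⟩, fun h => b (c h)⟩

/-- Label sets of weakly increasing sequences `c_1 ≤ ⋯ ≤ c_n ≤ H` with `P i c_i`. -/
def famW (P : ℕ → ℕ → Prop) (lab : ℕ → ℕ → ℕ) : ℕ → ℕ → Set (Finset ℕ)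
  | 0, _ => {∅}
  | n + 1, H => {X | ∃ h, P (n + 1) h ∧ h ≤ H ∧ ∃ Y ∈ famW P lab n h, X = insert (lab (n + 1) h) Y}

section
variable {P : ℕ → ℕ → Prop} {lab : ℕ → ℕ → ℕ}

lemma famW_mono (n : ℕ) {H H' : ℕ} (h : H ≤ H') : famW P lab n H ⊆ famW P lab n H' := by
  cases n with
  | zero => exact subset_rfl
  | succ n =>
    rintro X ⟨k, a, b, c⟩
    exact ⟨k, a, b.trans h, c⟩

lemma famW_mem {n H : ℕ} {X : Finset ℕ} (hX : X ∈ famW P lab n H) :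
    ∀ x ∈ X, ∃ i c, 1 ≤ i ∧ i ≤ n ∧ P i c ∧ x = lab i c := by
  induction n generalizing H X with
  | zero => simp only [famW, Set.mem_singleton_iff] at hX; subst hX; simp
  | succ n ih =>
    obtain ⟨h, hP, hh, Y, hY, rfl⟩ := hX
    intro x hx
    rcases Finset.mem_insert.1 hx with rfl | hx
    · exact ⟨n + 1, h, by omega, le_rfl, hP, rfl⟩
    · obtain ⟨i, c, a, b, d⟩ := ih hY x hx
      exact ⟨i, c, a, by omega, d⟩

lemma famW_card (inj : ∀ i c i' c', 1 ≤ i → 1 ≤ i' → P i c → P i' c' → lab i c = lab i' c' →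
      i = i' ∧ c = c') {n H : ℕ} {X : Finset ℕ} (hX : X ∈ famW P lab n H) : X.card = n := by
  induction n generalizing H X with
  | zero => simp only [famW, Set.mem_singleton_iff] at hX; subst hX; simp
  | succ n ih =>
    obtain ⟨h, hP, hh, Y, hY, rfl⟩ := hX
    rw [Finset.card_insert_of_notMem, ih hY]
    intro hm
    obtain ⟨i, c, a, b, d, e⟩ := famW_mem hY _ hm
    have := (inj _ _ _ _ (by omega) a hP d e).1
    omega

lemma famW_nonempty (hdown : ∀ i c, P (i + 1) c → P i c) {n H : ℕ} (hP : P n H) :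
    (famW P lab n H).Nonempty := by
  induction n with
  | zero => exact ⟨∅, rfl⟩
  | succ n ih =>
    obtain ⟨Y, hY⟩ := ih (hdown _ _ hP)
    exact ⟨_, H, hP, le_rfl, Y, hY, rfl⟩

lemma famW_vd (inj : ∀ i c i' c', 1 ≤ i → 1 ≤ i' → P i c → P i' c' → lab i c = lab i' c' →
      i = i' ∧ c = c') (hdown : ∀ i c, P (i + 1) c → P i c)
    (hup : ∀ i c c' H, P i c → c ≤ c' → c' ≤ H → P i H → P i c')
    (n : ℕ) : ∀ (H : ℕ) (S : Finset ℕ), P n H →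
      (∀ i c, 1 ≤ i → i ≤ n → P i c → lab i c ∉ S) →
      VertexDecomposable (genC {G | ∃ X ∈ famW P lab n H, G = S ∪ X}) := by
  induction n with
  | zero =>
    intro H S _ _
    convert VertexDecomposable.simplex S using 1
    ext F
    simp [genC, famW]
  | succ n ih =>
    intro H S hPH hS
    have step : ∀ d l, l + d = H → VertexDecomposable (genC {G | ∃ h, P (n + 1) h ∧ l ≤ h ∧
        h ≤ H ∧ ∃ Y ∈ famW P lab n h, G = S ∪ insert (lab (n + 1) h) Y}) := by
      intro d
      induction d with
      | zero =>
        intro l hl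
        obtain rfl : l = H := hl
        have := ih l (insert (lab (n + 1) l) S) (hdown _ _ hPH) (by
          intro i c hi hin hP hm
          rcases Finset.mem_insert.1 hm with h | h
          · have := (inj _ _ _ _ hi (by omega) hP hPH h).1; omega
          · exact hS i c hi (by omega) hP h)
        convert this using 3
        ext G
        constructor
        · rintro ⟨h, -, h1, h2, Y, hY, rfl⟩
          obtain rfl : h = l := le_antisymm h2 h1
          exact ⟨Y, hY, by simp⟩
        · rintro ⟨Y, hY, rfl⟩
          exact ⟨l, hPH, le_rfl, le_rfl, Y, hY, by simp⟩
      | succ d ihd =>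
        intro l hl
        have IH := ihd (l + 1) (by omega)
        by_cases hPl : P (n + 1) l
        swap
        · convert IH using 3
          ext G
          constructor
          · rintro ⟨h, a, b, c⟩
            refine ⟨h, a, ?_, c⟩
            rcases b.eq_or_lt with e | e
            · subst e; exact absurd a hPl
            · exact e
          · rintro ⟨h, a, b, c⟩
            exact ⟨h, a, by omega, c⟩
        set v := lab (n + 1) l with hv
        have hvS : v ∉ S := hS _ _ (by omega) le_rfl hPl
        have hvY : ∀ h, ∀ Y ∈ famW P lab n h, v ∉ Y := by
          intro h Y hY hm
          obtain ⟨i, c, a, b, d, e⟩ := famW_mem hY _ hm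
          have := (inj _ _ _ _ (by omega) a hPl d e).1
          omega
        have hvG : ∀ h, P (n + 1) h → ∀ Y ∈ famW P lab n h,
            (v ∈ S ∪ insert (lab (n + 1) h) Y ↔ h = l) := by
          intro h hP Y hY
          constructor
          · intro hm
            rcases Finset.mem_union.1 hm with hm | hm
            · exact absurd hm hvS
            rcases Finset.mem_insert.1 hm with hm | hm
            · exact ((inj _ _ _ _ (by omega) (by omega) hPl hP hm).2).symm
            · exact absurd hm (hvY h Y hY)
          · rintro rfl; simp [hv]
        have herase : ∀ Y ∈ famW P lab n l, (S ∪ insert v Y).erase v = S ∪ Y := by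
          intro Y hY
          have := hvY l Y hY
          ext z
          by_cases hz : z = v
          · subst hz; simp [hvS, this]
          · simp [hz]
        refine vd_shed_gen _ (S.card + (n + 1)) ?_ v ?_ ?_ ?_ ?_
        · rintro G ⟨h, hP, -, -, Y, hY, rfl⟩
          have hmem : insert (lab (n + 1) h) Y ∈ famW P lab (n + 1) h := ⟨h, hP, le_rfl, Y, hY, rfl⟩
          rw [Finset.card_union_of_disjoint, famW_card inj hmem]
          rw [Finset.disjoint_right]
          intro x hx
          obtain ⟨i, c, a, b, d, rfl⟩ := famW_mem hmem x hx
          exact hS i c a b d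
        · obtain ⟨Y, hY⟩ := famW_nonempty (lab := lab) hdown (hdown _ _ hPl)
          exact ⟨_, ⟨l, hPl, le_rfl, by omega, Y, hY, rfl⟩, by simp [hv]⟩
        · rintro G ⟨h, hP, h1, h2, Y, hY, rfl⟩ hvm
          obtain rfl := (hvG h hP Y hY).1 hvm
          have hP' : P (n + 1) (h + 1) := hup _ _ _ _ hP (Nat.le_succ h) (by omega) hPH
          have hY' := famW_mono n (Nat.le_succ h) hY
          refine ⟨_, ⟨h + 1, hP', by omega, by omega, Y, hY', rfl⟩, ?_, ?_⟩
          · rw [hvG _ hP' _ hY']; omega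
          · rw [herase Y hY]
            exact Finset.union_subset_union_right (Finset.subset_insert _ _)
        · have := ih l S (hdown _ _ hPl) (fun i c a b => hS i c a (by omega))
          convert this using 3
          ext G
          constructor
          · rintro ⟨G', ⟨h, hP, h1, h2, Y, hY, rfl⟩, hvm, rfl⟩
            obtain rfl := (hvG h hP Y hY).1 hvm
            exact ⟨Y, hY, herase Y hY⟩
          · rintro ⟨Y, hY, rfl⟩
            exact ⟨_, ⟨l, hPl, le_rfl, by omega, Y, hY, rfl⟩, by simp [hv], (herase Y hY).symm⟩
        · convert IH using 3
          ext G
          constructor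
          · rintro ⟨⟨h, hP, h1, h2, Y, hY, rfl⟩, hvm⟩
            rw [hvG h hP Y hY] at hvm
            exact ⟨h, hP, by omega, h2, Y, hY, rfl⟩
          · rintro ⟨h, hP, h1, h2, Y, hY, rfl⟩
            refine ⟨⟨h, hP, by omega, h2, Y, hY, rfl⟩, ?_⟩
            rw [hvG h hP Y hY]; omega
    convert step H 0 (by omega) using 3
    ext G
    constructor
    · rintro ⟨X, ⟨h, a, b, Y, hY, rfl⟩, rfl⟩
      exact ⟨h, a, by omega, b, Y, hY, rfl⟩
    · rintro ⟨h, a, -, b, Y, hY, rfl⟩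
      exact ⟨_, ⟨h, a, b, Y, hY, rfl⟩, rfl⟩
end

/-- Validity of the cell in column `i` and in the row at height `c` from the bottom. -/
def cellP (r : ℕ) (lam : ℕ → ℕ) (i c : ℕ) : Prop := c < r ∧ i ≤ lam (r - c)

lemma inColumn_iff {t r : ℕ} {lam : ℕ → ℕ} {i a : ℕ} :
    inColumn t r lam i a ↔ ∃ c, cellP r lam i c ∧ a = c * t + i := by
  constructor
  · rintro ⟨j, h1, h2, h3, h4⟩
    exact ⟨r - j, ⟨by omega, by rwa [Nat.sub_sub_self h2]⟩, h4⟩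
  · rintro ⟨c, ⟨h1, h2⟩, h3⟩
    exact ⟨r - c, by omega, by omega, h2, by rwa [Nat.sub_sub_self h1.le]⟩

lemma young_eq (t r : ℕ) (lam : ℕ → ℕ) (ht : 2 ≤ t) :
    youngComplex t r lam =
      genC {G | ∃ X ∈ famW (cellP r lam) (fun i c => c * t + i) (lam 1) (r - 1), G = ∅ ∪ X} := by
  ext F
  simp only [Finset.empty_union, genC, Set.mem_ofPred_eq, exists_eq_right']
  constructor
  · rintro ⟨a, h1, h2, h3⟩
    refine ⟨_, ?_, h3⟩
    have h2' : ∀ i, ∃ c, 1 ≤ i → i ≤ lam 1 → cellP r lam i c ∧ a i = c * t + i := by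
      intro i
      by_cases h : 1 ≤ i ∧ i ≤ lam 1
      · obtain ⟨c, hc⟩ := inColumn_iff.1 (h2 i h.1 h.2)
        exact ⟨c, fun _ _ => hc⟩
      · exact ⟨0, fun a b => absurd ⟨a, b⟩ h⟩
    choose c hc using h2'
    have key : ∀ n, n ≤ lam 1 → ∀ H, (1 ≤ n → c n ≤ H) → Finset.image a (Finset.Icc 1 n) ∈
        famW (cellP r lam) (fun i c => c * t + i) n H := by
      intro n
      induction n with
      | zero => intro _ H _; simp [famW]
      | succ n ih =>
        intro hn H hH
        refine ⟨c (n + 1), (hc (n + 1) (by omega) hn).1, hH (by omega), _,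
          ih (by omega) (c (n + 1)) ?_, ?_⟩
        · intro hn1
          have e1 := (hc n hn1 (by omega)).2
          have e2 := (hc (n + 1) (by omega) hn).2
          have e3 := h1 n hn1 (by omega)
          by_contra hcon
          have : (c (n + 1) + 1) * t ≤ c n * t := Nat.mul_le_mul_right _ (by omega)
          rw [Nat.add_mul] at this
          omega
        · have e2 := (hc (n + 1) (by omega) hn).2
          dsimp only
          rw [← e2, ← Finset.image_insert, Finset.insert_Icc_right_eq_Icc_add_one (by omega)]
    refine key _ le_rfl _ fun h => ?_
    have := (hc _ h le_rfl).1.1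
    omega
  · rintro ⟨X, hX, hFX⟩
    have key : ∀ n H X, X ∈ famW (cellP r lam) (fun i c => c * t + i) n H →
        ∃ a : ℕ → ℕ, (∀ i, 1 ≤ i → i < n → a i < a (i + 1)) ∧
          (∀ i, 1 ≤ i → i ≤ n → inColumn t r lam i (a i)) ∧
          X = Finset.image a (Finset.Icc 1 n) ∧ (1 ≤ n → a n ≤ H * t + n) := by
      intro n
      induction n with
      | zero =>
        intro H X hX
        simp only [famW, Set.mem_singleton_iff] at hX
        exact ⟨id, by omega, by omega, by simp [hX], by omega⟩
      | succ n ih =>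
        rintro H X ⟨h, hP, hh, Y, hY, rfl⟩
        obtain ⟨a, h1, h2, rfl, h4⟩ := ih h Y hY
        refine ⟨fun i => if i = n + 1 then h * t + (n + 1) else a i, ?_, ?_, ?_, ?_⟩
        · intro i hi hin
          dsimp only
          rw [if_neg (by omega)]
          split_ifs with h'
          · obtain rfl : i = n := by omega
            have := h4 hi; omega
          · exact h1 i hi (by omega)
        · intro i hi hin
          dsimp only
          split_ifs with h'
          · subst h'; exact inColumn_iff.2 ⟨h, hP, rfl⟩
          · exact h2 i hi (by omega)
        · rw [← Finset.insert_Icc_right_eq_Icc_add_one (by omega), Finset.image_insert, if_pos rfl]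
          congr 1
          apply Finset.image_congr
          intro i hi
          simp only [Finset.coe_Icc, Set.mem_Icc] at hi
          dsimp only
          rw [if_neg (by omega)]
        · intro _
          dsimp only
          rw [if_pos rfl]
          have : h * t ≤ H * t := Nat.mul_le_mul_right _ hh
          omega
    obtain ⟨a, h1, h2, rfl, -⟩ := key _ _ _ hX
    exact ⟨a, h1, h2, hFX⟩

/-- For `t ≥ 2`, the `t`-Young complex `Δ_t^λ` is vertex-decomposable iff either
`r = 1`, or `r ≥ 2` and `λ_2 ≤ t`. -/
theorem youngComplex_vertexDecomposable_iff (t r : ℕ) (lam : ℕ → ℕ) (ht : 2 ≤ t)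
    (hr : 1 ≤ r) (hlam : isPartition r lam) :
    VertexDecomposable (youngComplex t r lam) ↔
      r = 1 ∨ (2 ≤ r ∧ lam 2 ≤ t) := by
  constructor
  · intro hvd
    by_contra hcon
    obtain ⟨q, rfl⟩ : ∃ q, r = q + 2 := ⟨r - 2, by omega⟩
    exact not_bad_of_vd hvd (young_finite _ _ _) (young_down _ _ _)
      (young_bad t q lam ht (hlam.2 1 2 le_rfl (by omega) (by omega)) (by omega))
  · intro h
    rw [young_eq t r lam ht]
    have key : ∀ i c i' c', 1 ≤ i' → cellP r lam i c → cellP r lam i' c' → c < c' →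
        c * t + i ≠ c' * t + i' := by
      rintro i c i' c' hi' ⟨h1, h2⟩ ⟨h1', h2'⟩ hlt heq
      have h3 : lam (r - c) ≤ lam 2 := hlam.2 2 (r - c) (by omega) (by omega) (by omega)
      have : (c + 1) * t ≤ c' * t := Nat.mul_le_mul_right _ (by omega)
      rw [Nat.add_mul] at this
      omega
    refine famW_vd ?_ ?_ ?_ _ _ _ ?_ (by simp)
    · intro i c i' c' hi hi' hP hP' heq
      rcases lt_trichotomy c c' with hlt | rfl | hlt
      · exact absurd heq (key i c i' c' hi' hP hP' hlt)
      · exact ⟨by omega, rfl⟩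
      · exact absurd heq.symm (key i' c' i c hi hP' hP hlt)
    · rintro i c ⟨a, b⟩
      exact ⟨a, by omega⟩
    · rintro i c c' H ⟨a, b⟩ h1 h2 ⟨a', b'⟩
      exact ⟨by omega, b.trans (hlam.2 (r - c') (r - c) (by omega) (by omega) (by omega))⟩
    · exact ⟨by omega, by rw [Nat.sub_sub_self hr]⟩
end

section
/- Let t ≥ 2 be an integer and λ = (λ_1 ≥ λ_2 ≥ ⋯ ≥ λ_r ≥ 1) a partition. Then the t-Young complex Δ_t^λ is shellable if and only if either r = 1, or r ≥ 2 and λ_2 ≤ t. -/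
/-- A pure simplicial complex is shellable if its facets can be ordered
`F_1, …, F_m` so that for each `i ≥ 2` the intersection of `⟨F_1, …, F_{i-1}⟩` with
`⟨F_i⟩` is nonempty and generated by maximal proper faces of `F_i`. -/
def Shellable (Δ : Set (Finset ℕ)) : Prop :=
  ∃ (m : ℕ) (F : Fin m → Finset ℕ),
    Function.Injective F ∧
    (∀ G, isFacet Δ G ↔ ∃ i, F i = G) ∧
    ∀ i : Fin m, 0 < (i : ℕ) →
      (∃ x ∈ F i, ∃ j, j < i ∧ (F i).erase x ⊆ F j) ∧
      (∀ S, S ⊆ F i → (∃ j, j < i ∧ S ⊆ F j) →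
        ∃ x ∈ F i, S ⊆ (F i).erase x ∧ ∃ j, j < i ∧ (F i).erase x ⊆ F j)

/-- Sequences defining the facets. -/
def YValid (t r : ℕ) (lam : ℕ → ℕ) (a : ℕ → ℕ) : Prop :=
  (∀ i, 1 ≤ i → i < lam 1 → a i < a (i + 1)) ∧
  (∀ i, 1 ≤ i → i ≤ lam 1 → inColumn t r lam i (a i))

theorem YValid.lt {t r : ℕ} {lam a : ℕ → ℕ} (h : YValid t r lam a) {i k : ℕ}
    (hi : 1 ≤ i) (hik : i < k) (hk : k ≤ lam 1) : a i < a k := by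
  induction k, hik using Nat.le_induction with
  | base => exact h.1 i hi (by omega)
  | succ k hk' ih =>
    have := h.1 k (by omega) (by omega)
    have := ih (by omega)
    omega

theorem YValid.inj {t r : ℕ} {lam a : ℕ → ℕ} (h : YValid t r lam a) :
    Set.InjOn a (Finset.Icc 1 (lam 1) : Finset ℕ) := by
  intro i hi k hk e
  simp only [Finset.coe_Icc, Set.mem_Icc] at hi hk
  rcases lt_trichotomy i k with hlt | heq | hgt
  · have := h.lt hi.1 hlt hk.2
    omega
  · exact heq
  · have := h.lt hk.1 hgt hi.2
    omega

theorem YValid.card {t r : ℕ} {lam a : ℕ → ℕ} (h : YValid t r lam a) :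
    (Finset.image a (Finset.Icc 1 (lam 1))).card = lam 1 := by
  rw [Finset.card_image_of_injOn h.inj]
  simp

theorem YValid.facet {t r : ℕ} {lam a : ℕ → ℕ} (h : YValid t r lam a) :
    isFacet (youngComplex t r lam) (Finset.image a (Finset.Icc 1 (lam 1))) := by
  refine ⟨⟨a, h.1, h.2, subset_rfl⟩, ?_⟩
  rintro G ⟨b, hb1, hb2, hG⟩ hs
  have hb : YValid t r lam b := ⟨hb1, hb2⟩
  refine (Finset.eq_of_subset_of_card_le hs ?_).symm
  rw [h.card, ← hb.card]
  exact Finset.card_le_card hG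

theorem exists_valid_of_facet {t r : ℕ} {lam : ℕ → ℕ} {G : Finset ℕ}
    (h : isFacet (youngComplex t r lam) G) :
    ∃ a, YValid t r lam a ∧ G = Finset.image a (Finset.Icc 1 (lam 1)) := by
  obtain ⟨⟨a, h1, h2, hG⟩, hm⟩ := h
  exact ⟨a, ⟨h1, h2⟩, (hm _ ⟨a, h1, h2, subset_rfl⟩ hG).symm⟩

theorem shellable_of_weight (Δ : Set (Finset ℕ)) (hfin : {G | isFacet Δ G}.Finite)
    (w : Finset ℕ → ℕ)
    (H : ∀ C D, isFacet Δ C → isFacet Δ D → C ≠ D → w C ≤ w D →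
      ∃ x ∈ C, x ∉ D ∧ ∃ E, isFacet Δ E ∧ w C < w E ∧ C.erase x ⊆ E) :
    Shellable Δ := by
  classical
  set s := hfin.toFinset with hs
  let e := s.equivFin.symm
  let f : Fin s.card → ℤ := fun i => - (w (e i) : ℤ)
  have hmono : Monotone (f ∘ Tuple.sort f) := Tuple.monotone_sort f
  let F : Fin s.card → Finset ℕ := fun i => (e (Tuple.sort f i) : Finset ℕ)
  have hF : ∀ i j, j ≤ i → w (F i) ≤ w (F j) := by
    intro i j hij
    have h : -(w (F j) : ℤ) ≤ -(w (F i) : ℤ) := hmono hij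
    omega
  have hfac : ∀ G, isFacet Δ G ↔ ∃ i, F i = G := by
    intro G
    constructor
    · intro hG
      have hm : G ∈ s := by simpa [hs] using hG
      refine ⟨(Tuple.sort f).symm (e.symm ⟨G, hm⟩), ?_⟩
      simp [F]
    · rintro ⟨i, rfl⟩
      exact hfin.mem_toFinset.1 (e (Tuple.sort f i)).2
  have hinj : Function.Injective F := by
    intro i j hij
    exact (Tuple.sort f).injective (e.injective (Subtype.ext hij))
  have key : ∀ i : Fin s.card, ∀ S, S ⊆ F i → (∃ j, j < i ∧ S ⊆ F j) →
        ∃ x ∈ F i, S ⊆ (F i).erase x ∧ ∃ j, j < i ∧ (F i).erase x ⊆ F j := by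
    rintro i S hS ⟨j, hji, hSj⟩
    obtain ⟨x, hx, hxD, E, hE, hw, hsub⟩ := H (F i) (F j) ((hfac _).2 ⟨i, rfl⟩)
      ((hfac _).2 ⟨j, rfl⟩) (fun h => hji.ne' (hinj h)) (hF i j hji.le)
    obtain ⟨k, rfl⟩ := (hfac E).1 hE
    refine ⟨x, hx, ?_, k, ?_, hsub⟩
    · intro y hy
      refine Finset.mem_erase.2 ⟨?_, hS hy⟩
      rintro rfl
      exact hxD (hSj hy)
    · by_contra hk
      have := hF k i (not_lt.1 hk)
      omega
  refine ⟨s.card, F, hinj, hfac, fun i hi => ⟨?_, key i⟩⟩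
  obtain ⟨x, hx, -, h⟩ := key i ∅ (by simp) ⟨⟨0, by omega⟩, hi, by simp⟩
  exact ⟨x, hx, h⟩

theorem column_unique {t r : ℕ} {lam : ℕ → ℕ} (hlam : isPartition r lam)
    (h : r = 1 ∨ (2 ≤ r ∧ lam 2 ≤ t)) {i k a : ℕ} (hi : 1 ≤ i) (hk : 1 ≤ k)
    (h1 : inColumn t r lam i a) (h2 : inColumn t r lam k a) : i = k := by
  obtain ⟨j, hj1, hjr, hij, e1⟩ := h1
  obtain ⟨l, hl1, hlr, hkl, e2⟩ := h2
  rcases lt_trichotomy j l with hlt | heq | hgt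
  · have hl : k ≤ t := (hkl.trans (hlam.2 2 l (by omega) (by omega) hlr)).trans (by omega)
    have : (r - l + 1) * t ≤ (r - j) * t := Nat.mul_le_mul_right t (by omega)
    rw [Nat.add_mul] at this
    omega
  · subst heq
    omega
  · have hl : i ≤ t := (hij.trans (hlam.2 2 j (by omega) (by omega) hjr)).trans (by omega)
    have : (r - j + 1) * t ≤ (r - l) * t := Nat.mul_le_mul_right t (by omega)
    rw [Nat.add_mul] at this
    omega

theorem column_shift {t r : ℕ} {lam : ℕ → ℕ} (hlam : isPartition r lam) {i a d : ℕ}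
    (h1 : inColumn t r lam i a) (h2 : inColumn t r lam i d) (had : a < d) :
    inColumn t r lam i (a + t) ∧ a + t ≤ d := by
  obtain ⟨j, hj1, hjr, hij, e1⟩ := h1
  obtain ⟨l, hl1, hlr, hkl, e2⟩ := h2
  have hlj : l < j := by
    by_contra hc
    have : (r - l) * t ≤ (r - j) * t := Nat.mul_le_mul_right t (by omega)
    omega
  have hm : (r - j + 1) * t ≤ (r - l) * t := Nat.mul_le_mul_right t (by omega)
  have e3 : r - (j - 1) = r - j + 1 := by omega
  rw [Nat.add_mul] at hm
  refine ⟨⟨j - 1, by omega, by omega, hij.trans (hlam.2 _ _ (by omega) (by omega) hjr), ?_⟩,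
    by omega⟩
  rw [e3, Nat.add_mul]
  omega

theorem facets_finite (t r : ℕ) (lam : ℕ → ℕ) :
    {G | isFacet (youngComplex t r lam) G}.Finite := by
  apply Set.Finite.subset (Finset.finite_toSet (Finset.range (r * t + lam 1 + 1)).powerset)
  intro G hG
  obtain ⟨a, ha, rfl⟩ := exists_valid_of_facet hG
  simp only [Finset.coe_powerset, Set.mem_preimage, Set.mem_powerset_iff, Finset.coe_subset]
  intro y hy
  obtain ⟨i, hi, rfl⟩ := Finset.mem_image.1 hy
  rw [Finset.mem_Icc] at hi
  obtain ⟨j, hj1, hjr, hij, e⟩ := ha.2 i hi.1 hi.2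
  have : (r - j) * t ≤ r * t := Nat.mul_le_mul_right t (by omega)
  rw [Finset.mem_range]
  omega

theorem young_shellable {t r : ℕ} {lam : ℕ → ℕ} (ht : 2 ≤ t) (hlam : isPartition r lam)
    (h : r = 1 ∨ (2 ≤ r ∧ lam 2 ≤ t)) : Shellable (youngComplex t r lam) := by
  classical
  refine shellable_of_weight _ (facets_finite t r lam) (fun G => ∑ x ∈ G, x) ?_
  intro C D hC hD hne hw
  obtain ⟨a, ha, rfl⟩ := exists_valid_of_facet hC
  obtain ⟨d, hd, rfl⟩ := exists_valid_of_facet hD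
  simp only [Finset.sum_image ha.inj, Finset.sum_image hd.inj] at hw ⊢
  have hex : ((Finset.Icc 1 (lam 1)).filter (fun i => a i < d i)).Nonempty := by
    by_contra hc
    rw [Finset.not_nonempty_iff_eq_empty, Finset.filter_eq_empty_iff] at hc
    have hle : ∀ i ∈ Finset.Icc 1 (lam 1), d i ≤ a i := fun i hi => not_lt.1 (hc hi)
    have heq := (Finset.sum_eq_sum_iff_of_le hle).1 (le_antisymm (Finset.sum_le_sum hle) hw)
    exact hne (Finset.image_congr (fun i hi => (heq i hi).symm))
  obtain ⟨i, hi, hmax⟩ := Finset.exists_max_image _ id hex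
  simp only [Finset.mem_filter, Finset.mem_Icc, id] at hi hmax
  obtain ⟨⟨hi1, hin⟩, hlt⟩ := hi
  obtain ⟨hcol, hle⟩ := column_shift hlam (ha.2 i hi1 hin) (hd.2 i hi1 hin) hlt
  have hnext : i < lam 1 → a i + t < a (i + 1) := by
    intro hil
    have h1 := hd.1 i hi1 hil
    have h2 : d (i + 1) ≤ a (i + 1) := by
      by_contra hc
      have := hmax (i + 1) ⟨⟨by omega, by omega⟩, by omega⟩
      omega
    omega
  have hb : YValid t r lam (Function.update a i (a i + t)) := by
    constructor
    · intro k hk1 hkn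
      have h0 := ha.1 k hk1 hkn
      by_cases hki : k = i
      · subst hki
        simpa using hnext hkn
      · by_cases hki' : k + 1 = i
        · subst hki'
          simp
          omega
        · simpa [Function.update_of_ne hki, Function.update_of_ne hki'] using h0
    · intro k hk1 hkn
      by_cases hki : k = i
      · subst hki
        simpa using hcol
      · simpa [Function.update_of_ne hki] using ha.2 k hk1 hkn
  refine ⟨a i, Finset.mem_image_of_mem _ (Finset.mem_Icc.2 ⟨hi1, hin⟩), ?_, _, hb.facet, ?_, ?_⟩
  · intro hm
    obtain ⟨k, hk, e⟩ := Finset.mem_image.1 hm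
    rw [Finset.mem_Icc] at hk
    have hc := hd.2 k hk.1 hk.2
    rw [e] at hc
    have := column_unique hlam h hi1 hk.1 (ha.2 i hi1 hin) hc
    subst this
    omega
  · rw [Finset.sum_image hb.inj]
    apply Finset.sum_lt_sum
    · intro k hk
      by_cases hki : k = i
      · subst hki
        simp
      · simp [Function.update_of_ne hki]
    · exact ⟨i, Finset.mem_Icc.2 ⟨hi1, hin⟩, by simp; omega⟩
  · intro y hy
    obtain ⟨hy1, hy2⟩ := Finset.mem_erase.1 hy
    obtain ⟨k, hk, rfl⟩ := Finset.mem_image.1 hy2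
    have hki : k ≠ i := fun hh => hy1 (by rw [hh])
    exact Finset.mem_image.2 ⟨k, hk, by simp [Function.update_of_ne hki]⟩

theorem young_not_shellable {t r : ℕ} {lam : ℕ → ℕ} (ht : 2 ≤ t) (hlam : isPartition r lam)
    (hr : 2 ≤ r) (hl : t < lam 2) : ¬ Shellable (youngComplex t r lam) := by
  classical
  have h12 : lam 2 ≤ lam 1 := hlam.2 1 2 (by omega) (by omega) hr
  have hR : (r - 1) * t = (r - 2) * t + t := by
    have : r - 1 = r - 2 + 1 := by omega
    rw [this, Nat.add_mul]
    omega
  -- the top facet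
  have hA : YValid t r lam (fun i => (r - 1) * t + i) :=
    ⟨fun i _ _ => by simp, fun i _ hi => ⟨1, le_rfl, by omega, hi, rfl⟩⟩
  -- the other facet
  have hB : YValid t r lam (fun i => if i ≤ lam 2 then (r - 2) * t + i else (r - 1) * t + i) := by
    constructor
    · intro i _ _
      dsimp only
      split_ifs <;> omega
    · intro i _ hi
      dsimp only
      split_ifs with h
      · exact ⟨2, by omega, hr, h, rfl⟩
      · exact ⟨1, le_rfl, by omega, hi, rfl⟩
  set A := Finset.image (fun i => (r - 1) * t + i) (Finset.Icc 1 (lam 1)) with hAdef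
  set B := Finset.image (fun i => if i ≤ lam 2 then (r - 2) * t + i else (r - 1) * t + i)
    (Finset.Icc 1 (lam 1)) with hBdef
  have hAlt : ∀ x ∈ A, (r - 1) * t + 1 ≤ x := by
    intro x hx
    obtain ⟨i, hi, rfl⟩ := Finset.mem_image.1 hx
    rw [Finset.mem_Icc] at hi
    omega
  have hvA : (r - 1) * t + 1 ∈ A :=
    Finset.mem_image.2 ⟨1, Finset.mem_Icc.2 ⟨by omega, by omega⟩, rfl⟩
  have hvB : (r - 1) * t + 1 ∈ B := by
    refine Finset.mem_image.2 ⟨t + 1, Finset.mem_Icc.2 ⟨by omega, by omega⟩, ?_⟩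
    rw [if_pos (by omega)]
    omega
  have hBA : B ≠ A := by
    intro h
    have hm : (r - 2) * t + 1 ∈ B := by
      refine Finset.mem_image.2 ⟨1, Finset.mem_Icc.2 ⟨by omega, by omega⟩, ?_⟩
      rw [if_pos (by omega)]
    rw [h] at hm
    have := hAlt _ hm
    omega
  have key : ∀ E, isFacet (youngComplex t r lam) E → (r - 1) * t + 1 ∈ E → E ≠ A →
      E.card = lam 1 ∧ ∃ x ∈ E, ∃ y ∈ E, x ≠ y ∧ x ∉ A ∧ y ∉ A := by
    intro E hE hv hne
    obtain ⟨a, ha, rfl⟩ := exists_valid_of_facet hE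
    refine ⟨ha.card, ?_⟩
    obtain ⟨l, hl', e⟩ := Finset.mem_image.1 hv
    rw [Finset.mem_Icc] at hl'
    have hl3 : 3 ≤ l := by
      obtain ⟨j, hj1, hjr, hij, e2⟩ := ha.2 l hl'.1 hl'.2
      rcases Nat.lt_or_ge j 2 with hj | hj
      · exfalso
        have hj : j = 1 := by omega
        subst hj
        have hl1 : l = 1 := by omega
        subst hl1
        apply hne
        refine Finset.image_congr (fun k hk => ?_)
        simp only [Finset.coe_Icc, Set.mem_Icc] at hk
        have hge : a 1 + (k - 1) ≤ a k := by
          obtain ⟨hk1, hk2⟩ := hk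
          induction k, hk1 using Nat.le_induction with
          | base => simp
          | succ k hk' ih =>
            have := ih (by omega)
            have := ha.1 k hk' (by omega)
            omega
        obtain ⟨m, hm1, hmr, hkm, e3⟩ := ha.2 k hk.1 hk.2
        have : (r - m) * t ≤ (r - 1) * t := Nat.mul_le_mul_right t (by omega)
        omega
      · have : (r - j) * t ≤ (r - 2) * t := Nat.mul_le_mul_right t (by omega)
        omega
    have h1 := ha.lt (i := 1) (k := 2) (by omega) (by omega) (by omega)
    have h2 := ha.lt (i := 2) (k := l) (by omega) (by omega) hl'.2
    refine ⟨a 1, Finset.mem_image_of_mem _ (Finset.mem_Icc.2 ⟨by omega, by omega⟩), a 2,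
      Finset.mem_image_of_mem _ (Finset.mem_Icc.2 ⟨by omega, by omega⟩), by omega, ?_, ?_⟩
    · intro h
      have := hAlt _ h
      omega
    · intro h
      have := hAlt _ h
      omega
  rintro ⟨m, F, hinj, hfac, hsh⟩
  obtain ⟨i, hi⟩ := (hfac A).1 hA.facet
  obtain ⟨j, hj⟩ := (hfac B).1 hB.facet
  have hvS : ∀ k, (r - 1) * t + 1 ∈ F k → {(r - 1) * t + 1} ⊆ F k := by
    intro k hk
    simpa using hk
  by_cases hcase : ∃ k, k < i ∧ (r - 1) * t + 1 ∈ F k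
  · obtain ⟨k, hk, hvk⟩ := hcase
    obtain ⟨x, hx, hsx, l, hl', hsub⟩ := (hsh i (by have := Fin.lt_def.1 hk; omega)).2
      {(r - 1) * t + 1} (hvS i (hi ▸ hvA)) ⟨k, hk, hvS k hvk⟩
    have hvl : (r - 1) * t + 1 ∈ F l := hsub (hsx (by simp))
    obtain ⟨hc, y, hy, z, hz, hyz, hyA, hzA⟩ := key (F l) ((hfac _).2 ⟨l, rfl⟩) hvl
      (fun h => hl'.ne (hinj (h.trans hi.symm)))
    rw [hi] at hsub hx
    have hss : insert y (insert z (A.erase x)) ⊆ F l := by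
      intro u hu
      simp only [Finset.mem_insert] at hu
      rcases hu with rfl | rfl | hu
      · exact hy
      · exact hz
      · exact hsub hu
    have hcard := Finset.card_le_card hss
    have hze : z ∉ A.erase x := fun h => hzA (Finset.mem_of_mem_erase h)
    have hye : y ∉ insert z (A.erase x) := by
      intro h
      rcases Finset.mem_insert.1 h with h | h
      · exact hyz h
      · exact hyA (Finset.mem_of_mem_erase h)
    rw [Finset.card_insert_of_notMem hye, Finset.card_insert_of_notMem hze,
      Finset.card_erase_of_mem hx, hc, hAdef, hA.card] at hcard
    omega
  · push Not at hcase
    have hne : (Finset.univ.filter (fun k : Fin m => (r - 1) * t + 1 ∈ F k ∧ k ≠ i)).Nonempty := by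
      refine ⟨j, ?_⟩
      simp only [Finset.mem_filter, Finset.mem_univ, true_and]
      refine ⟨hj ▸ hvB, ?_⟩
      rintro rfl
      exact hBA (hj.symm.trans hi)
    obtain ⟨k, hk, hmin⟩ := Finset.exists_min_image _ id hne
    simp only [Finset.mem_filter, Finset.mem_univ, true_and, id] at hk hmin
    have hik : i < k := by
      rcases lt_trichotomy i k with h | h | h
      · exact h
      · exact absurd h.symm hk.2
      · exact absurd hk.1 (hcase k h)
    obtain ⟨x, hx, hsx, l, hl', hsub⟩ := (hsh k (by have := Fin.lt_def.1 hik; omega)).2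
      {(r - 1) * t + 1} (hvS k hk.1) ⟨i, hik, hvS i (hi ▸ hvA)⟩
    have hvl : (r - 1) * t + 1 ∈ F l := hsub (hsx (by simp))
    have hli : l = i := by
      by_contra h
      exact absurd (hmin l ⟨hvl, h⟩) (not_le.2 hl')
    obtain ⟨hc, y, hy, z, hz, hyz, hyA, hzA⟩ := key (F k) ((hfac _).2 ⟨k, rfl⟩) hk.1
      (fun h => hk.2 (hinj (h.trans hi.symm)))
    rw [hli, hi] at hsub
    by_cases hyx : y = x
    · exact hzA (hsub (Finset.mem_erase.2 ⟨fun h => hyz (hyx.trans h.symm), hz⟩))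
    · exact hyA (hsub (Finset.mem_erase.2 ⟨hyx, hy⟩))

/-- For `t ≥ 2`, the `t`-Young complex `Δ_t^λ` is shellable iff either `r = 1`,
or `r ≥ 2` and `λ_2 ≤ t`. -/
theorem youngComplex_shellable_iff (t r : ℕ) (lam : ℕ → ℕ) (ht : 2 ≤ t)
    (hr : 1 ≤ r) (hlam : isPartition r lam) :
    Shellable (youngComplex t r lam) ↔ r = 1 ∨ (2 ≤ r ∧ lam 2 ≤ t) := by
  constructor
  · intro h
    by_contra hc
    exact young_not_shellable ht hlam (by omega) (by omega) h
  · exact young_shellable ht hlam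
end

section
/- Let t ≥ 1 be an integer and λ = (λ_1 ≥ λ_2 ≥ ⋯ ≥ λ_r ≥ 1) a partition with r ≥ 2 and λ_1 = λ_2 ≤ t. Then the subcomplex of the t-Young complex Δ_t^λ consisting of all faces disjoint from the top row, namely {F ∈ Δ_t^λ : F ∩ {(r−1)t+1, (r−1)t+2, …, (r−1)t+λ_1} = ∅}, is equal to the t-Young complex Δ_t^{λ'}, where λ' = (λ_2, λ_3, …, λ_r). -/
/-- For a partition `λ` with `r ≥ 2` parts, `λ_1 = λ_2` and `λ_1 ≤ t`, the subcomplex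
of `Δ_t^λ` of faces disjoint from the top row `{(r-1)t+1, …, (r-1)t+λ_1}` equals the
`t`-Young complex of `λ' = (λ_2, …, λ_r)`. -/
theorem youngComplex_deleteTopRow_small (t r : ℕ) (lam : ℕ → ℕ) (ht : 1 ≤ t)
    (hr : 2 ≤ r) (hlam : isPartition r lam) (h12 : lam 1 = lam 2) (hle : lam 1 ≤ t) :
    { F | F ∈ youngComplex t r lam ∧
        F ∩ Finset.image (fun i => (r - 1) * t + i) (Finset.Icc 1 (lam 1)) = ∅ } =
      youngComplex t (r - 1) (fun j => lam (j + 1)) := by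
  obtain ⟨s, rfl⟩ : ∃ s, r = s + 2 := ⟨r - 2, by omega⟩
  have e1 : s + 2 - 1 = s + 1 := rfl
  have key : ∀ j, 2 ≤ j → (s + 2 - j) * t ≤ s * t := fun j hj =>
    Nat.mul_le_mul_right t (by omega)
  have hs : (s + 1) * t = s * t + t := by ring
  ext F
  simp only [Set.mem_setOf_eq, youngComplex, e1, zero_add, Nat.reduceAdd, ← h12]
  constructor
  · rintro ⟨⟨a, hmono, hcol, hF⟩, hdisj⟩
    refine ⟨fun i => min (a i) (s * t + i), ?_, ?_, ?_⟩
    · intro i h1 h2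
      have := hmono i h1 h2
      show min (a i) (s * t + i) < min (a (i + 1)) (s * t + (i + 1))
      omega
    · intro i h1 h2
      obtain ⟨j, hj1, hj2, hj3, hj4⟩ := hcol i h1 h2
      show inColumn t (s + 1) _ i (min (a i) (s * t + i))
      by_cases hj : j = 1
      · subst hj
        rw [e1] at hj4
        refine ⟨1, le_refl _, by omega, ?_, ?_⟩
        · show i ≤ lam 2
          omega
        · rw [Nat.add_sub_cancel]
          omega
      · have hk := key j (by omega)
        refine ⟨j - 1, by omega, by omega, ?_, ?_⟩
        · show i ≤ lam (j - 1 + 1)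
          rwa [Nat.sub_add_cancel hj1]
        · rw [show s + 1 - (j - 1) = s + 2 - j by omega]
          omega
    · intro x hx
      obtain ⟨i, hi, rfl⟩ := Finset.mem_image.1 (hF hx)
      refine Finset.mem_image.2 ⟨i, hi, ?_⟩
      have hi' := Finset.mem_Icc.1 hi
      obtain ⟨j, hj1, hj2, hj3, hj4⟩ := hcol i hi'.1 hi'.2
      by_cases hj : j = 1
      · exfalso
        subst hj
        have hmem : a i ∈ F ∩ Finset.image (fun i => (s + 1) * t + i)
            (Finset.Icc 1 (lam 1)) :=
          Finset.mem_inter.2 ⟨hx, Finset.mem_image.2 ⟨i, hi, hj4.symm⟩⟩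
        rw [hdisj] at hmem
        simp at hmem
      · have hk := key j (by omega)
        show min (a i) (s * t + i) = a i
        omega
  · rintro ⟨a, hmono, hcol, hF⟩
    have hcol2 : ∀ i, 1 ≤ i → i ≤ lam 1 →
        ∃ j, 2 ≤ j ∧ j ≤ s + 2 ∧ i ≤ lam j ∧ a i = (s + 2 - j) * t + i := by
      intro i h1 h2
      obtain ⟨j, hj1, hj2, hj3, hj4⟩ := hcol i h1 h2
      refine ⟨j + 1, by omega, by omega, hj3, ?_⟩
      rw [hj4, show s + 2 - (j + 1) = s + 1 - j by omega]
    refine ⟨⟨a, hmono, ?_, hF⟩, ?_⟩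
    · intro i h1 h2
      obtain ⟨j, hj1, hj2, hj3, hj4⟩ := hcol2 i h1 h2
      exact ⟨j, by omega, hj2, hj3, hj4⟩
    · rw [Finset.eq_empty_iff_forall_notMem]
      intro x hx
      obtain ⟨hx1, hx2⟩ := Finset.mem_inter.1 hx
      obtain ⟨i, hi, rfl⟩ := Finset.mem_image.1 (hF hx1)
      obtain ⟨k, hk, hke⟩ := Finset.mem_image.1 hx2
      have hi' := Finset.mem_Icc.1 hi
      have hk' := Finset.mem_Icc.1 hk
      obtain ⟨j, hj1, hj2, hj3, hj4⟩ := hcol2 i hi'.1 hi'.2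
      have := key j hj1
      omega
end

section
/- Let t ≥ 1 be an integer and λ = (λ_1 ≥ λ_2 ≥ ⋯ ≥ λ_r ≥ 1) a partition with r ≥ 2 and λ_1 = λ_2 > t, and set n = (r−1)t + λ_1. Then the subcomplex of the t-Young complex Δ_t^λ consisting of all faces disjoint from the last t entries of the top row, namely {F ∈ Δ_t^λ : F ∩ {n−t+1, n−t+2, …, n} = ∅}, is equal to the t-Young complex Δ_t^{λ'}, where λ' = (λ_2, λ_3, …, λ_r). -/
/-- For a partition `λ` with `r ≥ 2` parts, `λ_1 = λ_2` and `λ_1 > t`, setting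
`n = (r-1)t + λ_1`, the subcomplex of `Δ_t^λ` of faces disjoint from the last `t`
entries `{n-t+1, …, n}` of the top row equals the `t`-Young complex of
`λ' = (λ_2, …, λ_r)`. -/
theorem youngComplex_deleteTopRow_large (t r : ℕ) (lam : ℕ → ℕ) (ht : 1 ≤ t)
    (hr : 2 ≤ r) (hlam : isPartition r lam) (h12 : lam 1 = lam 2) (hgt : t < lam 1) :
    { F | F ∈ youngComplex t r lam ∧
        F ∩ Finset.Icc ((r - 1) * t + lam 1 - t + 1) ((r - 1) * t + lam 1) = ∅ } =
      youngComplex t (r - 1) (fun j => lam (j + 1)) := by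
  obtain ⟨q, rfl⟩ : ∃ q, r = q + 2 := ⟨r - 2, by omega⟩
  have e1 : q + 2 - 1 = q + 1 := by omega
  have e2 : (q + 1) * t = q * t + t := by ring
  rw [e1, e2]
  ext F
  simp only [Set.mem_ofPred_eq, youngComplex, inColumn]
  constructor
  · rintro ⟨⟨a, hmono, hcol, hF⟩, hdis⟩
    have hgrow : ∀ k i, 1 ≤ i → i + k ≤ lam 1 → a i + k ≤ a (i + k) := by
      intro k
      induction k with
      | zero => intro i _ _; simp
      | succ k ih =>
        intro i hi hk
        have h1 := ih i hi (by omega)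
        have h2 := hmono (i + k) (by omega) (by omega)
        have h3 : i + (k + 1) = i + k + 1 := by omega
        rw [h3]
        omega
    refine ⟨fun i => min (a i) (q * t + i), ?_, ?_, ?_⟩
    · intro i hi hi'
      have := hmono i hi (by simpa [h12] using hi')
      simp only
      omega
    · intro i hi hi'
      have hi2 : i ≤ lam 2 := by simpa using hi'
      obtain ⟨j, hj1, hjr, hij, hj⟩ := hcol i hi (by omega)
      by_cases hj2 : j = 1
      · subst hj2
        refine ⟨1, le_refl _, by omega, hi2, ?_⟩
        rw [e1, e2] at hj
        have h4 : q + 1 - 1 = q := by omega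
        rw [h4]
        show min (a i) (q * t + i) = _
        omega
      · refine ⟨j - 1, by omega, by omega, ?_, ?_⟩
        · rwa [Nat.sub_add_cancel hj1]
        · have h5 : q + 1 - (j - 1) = q + 2 - j := by omega
          have h6 : (q + 2 - j) * t ≤ q * t := Nat.mul_le_mul_right t (by omega)
          rw [h5]
          show min (a i) (q * t + i) = _
          omega
    · intro x hx
      obtain ⟨i, hi, rfl⟩ := Finset.mem_image.mp (hF hx)
      rw [Finset.mem_Icc] at hi
      obtain ⟨j, hj1, hjr, hij, hj⟩ := hcol i hi.1 hi.2
      rw [Finset.mem_image]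
      by_cases hj2 : j = 1
      · subst hj2
        rw [e1, e2] at hj
        have hn : i + t ≤ lam 1 := by
          by_contra hcon
          have : a i ∈ F ∩ Finset.Icc (q * t + t + lam 1 - t + 1) (q * t + t + lam 1) := by
            rw [Finset.mem_inter, Finset.mem_Icc]
            exact ⟨hx, by omega, by omega⟩
          rw [hdis] at this
          simp at this
        have hg := hgrow t i hi.1 hn
        refine ⟨i + t, ?_, ?_⟩
        · rw [Finset.mem_Icc]
          simp only [Nat.reduceAdd]
          omega
        · omega
      · refine ⟨i, ?_, ?_⟩
        · rw [Finset.mem_Icc]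
          simp only [Nat.reduceAdd]
          omega
        · have h6 : (q + 2 - j) * t ≤ q * t := Nat.mul_le_mul_right t (by omega)
          omega
  · rintro ⟨b, hmono, hcol, hF⟩
    simp only [Nat.reduceAdd, ← h12] at hmono hcol hF
    refine ⟨⟨b, hmono, ?_, hF⟩, ?_⟩
    · intro i hi hi'
      obtain ⟨j, hj1, hjr, hij, hj⟩ := hcol i hi hi'
      refine ⟨j + 1, by omega, by omega, hij, ?_⟩
      have h5 : q + 2 - (j + 1) = q + 1 - j := by omega
      rw [h5]
      exact hj
    · rw [Finset.eq_empty_iff_forall_notMem]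
      intro x hx
      rw [Finset.mem_inter, Finset.mem_Icc] at hx
      obtain ⟨i, hi, rfl⟩ := Finset.mem_image.mp (hF hx.1)
      rw [Finset.mem_Icc] at hi
      obtain ⟨j, hj1, hjr, hij, hj⟩ := hcol i hi.1 hi.2
      have h6 : (q + 1 - j) * t ≤ q * t := Nat.mul_le_mul_right t (by omega)
      omega
end

section
/- Let n, k, t be positive integers and let i be an integer with 1 ≤ i ≤ k and it ≤ n. Then χ_t(n − it, k+1−i) ≤ χ_t(n, k+1). -/
/-- `χ_t(n,k)`: `0` if `n < kt`; `n - kt + 1` if `kt ≤ n ≤ k(t+1)`;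
`2(n-d)/(t+1) - k + 1` if `n > k(t+1)` and `n ≡ d (mod t+1)` with `0 ≤ d ≤ t-1`;
`2(n+1)/(t+1) - k` if `n > k(t+1)` and `n ≡ t (mod t+1)`
(here `d = n % (t+1)`, and the divisions by `t+1` are exact). -/
def chi (t n k : ℕ) : ℕ :=
  if n < k * t then 0
  else if n ≤ k * (t + 1) then n - k * t + 1
  else if n % (t + 1) = t then 2 * (n + 1) / (t + 1) - k
  else 2 * (n - n % (t + 1)) / (t + 1) - k + 1

/-- Value of `chi` in the third range, remainder `d < t`. -/
theorem chi_aux_low (t q d k : ℕ) (hd : d < t) (h : k * (t + 1) < q * (t + 1) + d) :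
    chi t (q * (t + 1) + d) k = 2 * q - k + 1 := by
  have hmod : (q * (t + 1) + d) % (t + 1) = d := by
    rw [Nat.mul_add_mod_self_right, Nat.mod_eq_of_lt (by omega)]
  have h2 : ¬ (q * (t + 1) + d < k * t) := by nlinarith
  have h3 : 2 * (q * (t + 1) + d - d) / (t + 1) = 2 * q := by
    rw [Nat.add_sub_cancel, ← mul_assoc, Nat.mul_div_cancel _ (by omega)]
  unfold chi
  rw [if_neg h2, if_neg (by omega), hmod, if_neg (by omega), h3]

/-- Value of `chi` in the third range, remainder `t`. -/
theorem chi_aux_top (t q k : ℕ) (h : k * (t + 1) < q * (t + 1) + t) :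
    chi t (q * (t + 1) + t) k = 2 * (q + 1) - k := by
  have hmod : (q * (t + 1) + t) % (t + 1) = t := by
    rw [Nat.mul_add_mod_self_right, Nat.mod_eq_of_lt (by omega)]
  have h2 : ¬ (q * (t + 1) + t < k * t) := by nlinarith
  have h3 : 2 * (q * (t + 1) + t + 1) / (t + 1) = 2 * (q + 1) := by
    rw [show 2 * (q * (t + 1) + t + 1) = 2 * (q + 1) * (t + 1) by ring,
      Nat.mul_div_cancel _ (by omega)]
  unfold chi
  rw [if_neg h2, if_neg (by omega), hmod, if_pos rfl, h3]

/-- Value of `chi` in the middle range. -/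
theorem chi_aux_mid (t n k : ℕ) (h1 : k * t ≤ n) (h : n ≤ k * (t + 1)) :
    chi t n k = n - k * t + 1 := by
  unfold chi
  rw [if_neg (by omega), if_pos h]

/-- The case of a single step. -/
theorem chi_aux_step (t m k : ℕ) (ht : 1 ≤ t) : chi t m k ≤ chi t (m + t) (k + 1) := by
  by_cases h1 : m < k * t
  · have : chi t m k = 0 := by unfold chi; rw [if_pos h1]
    omega
  have e1 : (k + 1) * t = k * t + t := by ring
  have e2 : (k + 1) * (t + 1) = k * (t + 1) + t + 1 := by ring
  by_cases h2 : m ≤ k * (t + 1)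
  · rw [chi_aux_mid t m k (by omega) h2, chi_aux_mid t (m + t) (k + 1) (by omega) (by omega)]
    omega
  obtain ⟨q, d, hd, rfl⟩ : ∃ q d, d < t + 1 ∧ m = q * (t + 1) + d :=
    ⟨m / (t + 1), m % (t + 1), Nat.mod_lt _ (by omega), (Nat.div_add_mod' m (t + 1)).symm⟩
  have hq : k ≤ q := by
    by_contra hc
    have : (q + 1) * (t + 1) ≤ k * (t + 1) := Nat.mul_le_mul_right _ (by omega)
    have e3 : (q + 1) * (t + 1) = q * (t + 1) + t + 1 := by ring
    omega
  have e3 : (q + 1) * (t + 1) = q * (t + 1) + t + 1 := by ring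
  rcases Nat.eq_zero_or_pos d with rfl | hd0
  · have hq' : k + 1 ≤ q := by
      by_contra hc
      obtain rfl : q = k := by omega
      omega
    have : (k + 1) * (t + 1) ≤ q * (t + 1) := Nat.mul_le_mul_right _ hq'
    rw [chi_aux_low t q 0 k (by omega) (by omega), add_zero,
      chi_aux_top t q (k + 1) (by omega)]
    omega
  · have hle : chi t (q * (t + 1) + d) k ≤ 2 * q + 2 - k := by
      rcases Nat.lt_or_ge d t with hdt | hdt
      · rw [chi_aux_low t q d k hdt (by omega)]; omega
      · obtain rfl : d = t := by omega
        rw [chi_aux_top d q k (by omega)]; omega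
    refine hle.trans ?_
    have e4 : q * (t + 1) + d + t = (q + 1) * (t + 1) + (d - 1) := by omega
    by_cases h3 : (k + 1) * (t + 1) < (q + 1) * (t + 1) + (d - 1)
    · rw [e4, chi_aux_low t (q + 1) (d - 1) (k + 1) (by omega) h3]
      omega
    · have hqk : q = k := by
        by_contra hc
        have : (k + 1) * (t + 1) ≤ q * (t + 1) := Nat.mul_le_mul_right _ (by omega)
        omega
      subst hqk
      have e5 : q * (t + 1) = q * t + q := by ring
      rw [chi_aux_mid t _ (q + 1) (by omega) (by omega)]
      omega

/-- Iterated steps. -/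
theorem chi_aux_iter (t m k i : ℕ) (ht : 1 ≤ t) :
    chi t m k ≤ chi t (m + i * t) (k + i) := by
  induction i with
  | zero => simp
  | succ i ih =>
    refine ih.trans ?_
    have := chi_aux_step t (m + i * t) (k + i) ht
    rwa [show m + (i + 1) * t = m + i * t + t by ring, ← add_assoc]

/-- `χ_t(n - it, k + 1 - i) ≤ χ_t(n, k + 1)` for `1 ≤ i ≤ k`. -/
theorem chi_sub_mul_le (n k t i : ℕ) (hn : 1 ≤ n) (hk : 1 ≤ k) (ht : 1 ≤ t)
    (hi1 : 1 ≤ i) (hik : i ≤ k) (hit : i * t ≤ n) :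
    chi t (n - i * t) (k + 1 - i) ≤ chi t n (k + 1) := by
  have h := chi_aux_iter t (n - i * t) (k + 1 - i) i ht
  rwa [Nat.sub_add_cancel hit, Nat.sub_add_cancel (by omega)] at h
end

section
/- Let t ≥ 2, k ≥ 1 and n be integers with n ≥ (k+1)t. Then χ_t(n − (t+1), k) ≤ χ_t(n, k+1) − 1. -/
/-- `χ_t(n - (t+1), k) ≤ χ_t(n, k+1) - 1` for `t ≥ 2`, `k ≥ 1` and `n ≥ (k+1)t`. -/
theorem chi_sub_succ_le (t k n : ℕ) (ht : 2 ≤ t) (hk : 1 ≤ k) (hn : (k + 1) * t ≤ n) :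
    chi t (n - (t + 1)) k ≤ chi t n (k + 1) - 1 := by
  obtain ⟨m, rfl⟩ : ∃ m, n = m + (t + 1) := ⟨n - (t + 1), by
    have : 1 * t ≤ k * t := Nat.mul_le_mul_right t hk
    have h2 : (k + 1) * t = k * t + t := by ring
    omega⟩
  have e1 : (k + 1) * t = k * t + t := by ring
  have e2 : (k + 1) * (t + 1) = k * (t + 1) + (t + 1) := by ring
  have e3 : (m + (t + 1)) % (t + 1) = m % (t + 1) := Nat.add_mod_right m (t + 1)
  rw [Nat.add_sub_cancel]
  unfold chi
  rw [e3, if_neg (not_lt.mpr hn), e1, e2]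
  by_cases h1 : m < k * t
  · rw [if_pos h1]
    exact Nat.zero_le _
  rw [if_neg h1]
  by_cases h2 : m ≤ k * (t + 1)
  · rw [if_pos h2, if_pos (by omega)]
    omega
  have h4 : ¬ m + (t + 1) ≤ k * (t + 1) + (t + 1) := by omega
  rw [if_neg h2, if_neg h4]
  have hq : k ≤ m / (t + 1) := (Nat.le_div_iff_mul_le (by omega)).2 (by omega)
  have hm : m = (t + 1) * (m / (t + 1)) + m % (t + 1) := (Nat.div_add_mod m (t + 1)).symm
  generalize m / (t + 1) = q at hq hm
  generalize m % (t + 1) = r at hm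
  by_cases h3 : r = t
  · have a1 : 2 * (m + 1) = (2 * (q + 1)) * (t + 1) := by rw [hm, h3]; ring
    have a2 : 2 * (m + (t + 1) + 1) = (2 * (q + 2)) * (t + 1) := by rw [hm, h3]; ring
    rw [if_pos h3, if_pos h3, a1, a2, Nat.mul_div_cancel _ (by omega),
      Nat.mul_div_cancel _ (by omega)]
    omega
  · have a1 : 2 * (m - r) = (2 * q) * (t + 1) := by
      rw [hm, Nat.add_sub_cancel]; ring
    have a2 : 2 * (m + (t + 1) - r) = (2 * (q + 1)) * (t + 1) := by
      have : m + (t + 1) - r = (t + 1) * q + (t + 1) := by omega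
      rw [this]; ring
    rw [if_neg h3, if_neg h3, a1, a2, Nat.mul_div_cancel _ (by omega),
      Nat.mul_div_cancel _ (by omega)]
    omega
end

section
/- Let t ≥ 2 and k ≥ 1 be integers, let n be an integer with n ≥ kt, and let i be an integer with 1 ≤ i ≤ n − kt + 1. Then χ_t(n − i, k) + χ_t(i − 1, 1) ≤ χ_t(n, k), where by convention χ_t(0, 1) = 0. -/
/-- The function `⌊n/(t+1)⌋ + ⌊(n+1)/(t+1)⌋`. -/
def gAux (t n : ℕ) : ℕ := n / (t + 1) + (n + 1) / (t + 1)

theorem gAux_step (t n : ℕ) (ht : 2 ≤ t) : gAux t (n + 1) ≤ gAux t n + 1 := by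
  unfold gAux
  have h1 : (n + 1 + 1) / (t + 1) ≤ (n + (t + 1)) / (t + 1) :=
    Nat.div_le_div_right (by omega)
  rw [Nat.add_div_right _ (by omega)] at h1
  omega

theorem gAux_lip (t n u : ℕ) (ht : 2 ≤ t) : gAux t (n + u) ≤ gAux t n + u := by
  induction u with
  | zero => simp
  | succ u ih =>
    have := gAux_step t (n + u) ht
    rw [← add_assoc]
    omega

theorem gAux_mono (t a b : ℕ) (h : a ≤ b) : gAux t a ≤ gAux t b := by
  unfold gAux
  exact Nat.add_le_add (Nat.div_le_div_right h) (Nat.div_le_div_right (by omega))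

theorem gAux_shift (t n k : ℕ) : gAux t (k * (t + 1) + n) = 2 * k + gAux t n := by
  unfold gAux
  have h1 : (k * (t + 1) + n) / (t + 1) = k + n / (t + 1) := by
    rw [add_comm, Nat.add_mul_div_right _ _ (by omega)]; omega
  have h2 : (k * (t + 1) + n + 1) / (t + 1) = k + (n + 1) / (t + 1) := by
    rw [add_assoc, add_comm, Nat.add_mul_div_right _ _ (by omega)]; omega
  omega

theorem gAux_super (t a b : ℕ) : gAux t a + gAux t b ≤ gAux t (a + b + 1) := by
  unfold gAux
  have h1 := Nat.add_div_le_add_div a (b + 1) (t + 1)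
  have h2 := Nat.add_div_le_add_div (a + 1) b (t + 1)
  have h3 := Nat.add_div_le_add_div (a + 1) (b + 1) (t + 1)
  have h4 : b / (t + 1) ≤ (b + 1) / (t + 1) := Nat.div_le_div_right (by omega)
  have h5 := Nat.add_div_le_add_div a (b + 1) (t + 1)
  rw [show a + (b + 1) = a + b + 1 by ring] at h1
  rw [show a + 1 + (b + 1) = a + b + 1 + 1 by ring] at h3
  have h6 : (a / (t + 1)) + b / (t + 1) ≤ (a + b + 1) / (t + 1) := by omega
  omega

theorem gAux_lt (t n : ℕ) (h : n < t) : gAux t n = 0 := by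
  unfold gAux
  rw [Nat.div_eq_of_lt (by omega), Nat.div_eq_of_lt (by omega)]

theorem chi_big (t n k : ℕ) (h : k * (t + 1) < n) : chi t n k + k = gAux t n + 1 := by
  have hkt : k * t ≤ k * (t + 1) := Nat.mul_le_mul_left _ (by omega)
  have hm : 0 < t + 1 := by omega
  have hk : k ≤ n / (t + 1) := (Nat.le_div_iff_mul_le hm).2 h.le
  have hr : n % (t + 1) < t + 1 := Nat.mod_lt _ hm
  have hd := Nat.div_add_mod n (t + 1)
  unfold chi gAux
  rw [if_neg (by omega), if_neg (by omega)]
  generalize n / (t + 1) = q at *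
  generalize n % (t + 1) = r at *
  split_ifs with h1
  · have e1 : n + 1 = (t + 1) * (q + 1) := by rw [← hd, h1]; ring
    have e2 : 2 * (n + 1) = (t + 1) * (2 * (q + 1)) := by rw [e1]; ring
    rw [e2, Nat.mul_div_cancel_left _ hm, e1, Nat.mul_div_cancel_left _ hm]
    omega
  · have e1 : (n + 1) / (t + 1) = q := by
      rw [← hd, add_assoc, Nat.mul_add_div hm, Nat.div_eq_of_lt (by omega), add_zero]
    have e2 : 2 * (n - r) = (t + 1) * (2 * q) := by
      rw [← hd, Nat.add_sub_cancel]; ring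
    rw [e2, Nat.mul_div_cancel_left _ hm, e1]
    omega

theorem chi_one (t n : ℕ) (ht : 2 ≤ t) : chi t n 1 = gAux t n := by
  by_cases h : 1 * (t + 1) < n
  · have := chi_big t n 1 h
    omega
  · by_cases h2 : n < t
    · rw [gAux_lt t n h2]
      unfold chi
      rw [if_pos (by omega)]
    · unfold chi
      rw [if_neg (by omega), if_pos (by omega)]
      have : n = t ∨ n = t + 1 := by omega
      unfold gAux
      rcases this with rfl | rfl
      · rw [Nat.div_eq_of_lt (by omega), Nat.div_self (by omega)]; omega
      · rw [Nat.div_self (by omega), show t + 1 + 1 = 1 + (t + 1) by ring,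
          Nat.add_div_right _ (by omega), Nat.div_eq_of_lt (by omega)]; omega

theorem chi_subadd (t k n i : ℕ) (ht : 2 ≤ t) (hk : 1 ≤ k) (hn : k * t ≤ n)
    (hi1 : 1 ≤ i) (hi : i ≤ n - k * t + 1) :
    chi t (n - i) k + chi t (i - 1) 1 ≤ chi t n k := by
  rw [chi_one t _ ht]
  obtain ⟨b, rfl⟩ : ∃ b, i = b + 1 := ⟨i - 1, by omega⟩
  have hkt : 1 * 1 ≤ k * t := Nat.mul_le_mul hk (by omega)
  obtain ⟨a, rfl⟩ : ∃ a, n = a + b + 1 := ⟨n - (b + 1), by omega⟩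
  rw [show a + b + 1 - (b + 1) = a by omega, Nat.add_sub_cancel]
  have hm : k * (t + 1) = k * t + k := by ring
  by_cases ha : k * (t + 1) < a
  · have h1 := chi_big t a k ha
    have h2 := chi_big t (a + b + 1) k (by omega)
    have h3 := gAux_super t a b
    omega
  · have hF : chi t a k + k * t = a + 1 := by
      unfold chi
      split_ifs <;> omega
    have h0 := gAux_lip t 0 b ht
    rw [gAux_lt t 0 (by omega), zero_add] at h0
    by_cases hs : k * (t + 1) < a + b + 1
    · have h2 := chi_big t (a + b + 1) k hs
      obtain ⟨x, hx⟩ : ∃ x, a + b + 1 = k * (t + 1) + x := ⟨a + b + 1 - k * (t + 1), by omega⟩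
      have h3 := gAux_shift t x k
      rw [← hx] at h3
      by_cases hu : b ≤ x
      · have := gAux_mono t b x hu
        omega
      · have := gAux_lip t x (b - x) ht
        rw [show x + (b - x) = b by omega] at this
        omega
    · have : chi t (a + b + 1) k = a + b + 1 - k * t + 1 := by
        unfold chi
        rw [if_neg (by omega), if_pos (by omega)]
      omega
end
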